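/- arXiv:2509.20255 — 8 statements merged into one kernel-verified Lean document; each statement's English description precedes it below -/
import Mathlib

section
/- Let k ≥ 1 and n ≥ 3k+1 be integers, and let A be a (2k)×n sign matrix. Then there exists a set S ⊆ {2, …, n} of columns with |S| ≤ k such that the top travel of A_S is positive. -/
/-- An `r × n` sign matrix: entries in `{+1, -1}` (1-indexed: `1 ≤ i ≤ r`, `1 ≤ j ≤ n`). -/
def IsSignMatrix (r n : ℕ) (A : ℕ → ℕ → ℤ) : Prop :=
  ∀ i j, 1 ≤ i → i ≤ r → 1 ≤ j → j ≤ n → A i j = 1 ∨ A i j = -1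

/-- `A_S`: the matrix obtained from `A` by negating every entry of each column in `S`. -/
def reorient (A : ℕ → ℕ → ℤ) (S : Finset ℕ) : ℕ → ℕ → ℤ :=
  fun i j => if j ∈ S then -A i j else A i j

/-- The first column `c'` with `c < c' ≤ n` where row `i` changes sign relative to
entry `a_{i,c}`, if such a column exists. -/
def rowChange (A : ℕ → ℕ → ℤ) (n i c : ℕ) : Option ℕ :=
  (List.range (n + 1)).find? fun c' => decide (c < c' ∧ A i c' ≠ A i c)

/-- `ttEntry A n i` is the column at which the top travel of `A` enters row `i`
(rows and columns 1-indexed): the travel enters row 1 at column 1, and, having entered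
row `i` at column `c`, it enters row `i+1` at the first sign change of row `i` after
column `c` (if any).  The value `some` at the "virtual" row `r+1` means the top travel
had a sign change in the bottom row `r`, i.e. the top travel is positive. -/
def ttEntry (A : ℕ → ℕ → ℤ) (n : ℕ) : ℕ → Option ℕ
  | 0 => none
  | 1 => some 1
  | i + 2 => (ttEntry A n (i + 1)).bind (rowChange A n (i + 1))

/-- The top travel of the `r × n` sign matrix `A` is positive: it contains two
horizontally consecutive entries of row `r` with opposite signs. -/
def ttPositive (A : ℕ → ℕ → ℤ) (r n : ℕ) : Prop :=
  (ttEntry A n (r + 1)).isSome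

/-- `A` is `k`-neighborly: for every set `S` of at most `k` columns, the top travel
of `A_S` is not positive. -/
def IsNeighborly (A : ℕ → ℕ → ℤ) (r n k : ℕ) : Prop :=
  ∀ S : Finset ℕ, S ⊆ Finset.Icc 1 n → S.card ≤ k → ¬ ttPositive (reorient A S) r n

/-- A plain travel of an `r × n` sign matrix, identified with the set `D` of columns of
its downward (vertical) moves: the columns `2 ≤ j₁ < ⋯ < j_{s-1} ≤ n` with `s ≤ r`. -/
def IsPlainTravel (r n : ℕ) (D : Finset ℕ) : Prop :=
  D ⊆ Finset.Icc 2 n ∧ D.card ≤ r - 1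

/-- The top travel of `A` follows exactly the plain travel with downward-move columns `D`:
it makes its downward moves precisely at the columns of `D` (entering rows `2, …, |D|+1`
there) and then ends at column `n` in row `|D|+1` without a further sign change. -/
def ttFollows (A : ℕ → ℕ → ℤ) (n : ℕ) (D : Finset ℕ) : Prop :=
  ttEntry A n (D.card + 2) = none ∧
  ∀ c, c ∈ D ↔ ∃ i, 2 ≤ i ∧ i ≤ D.card + 1 ∧ ttEntry A n i = some c

/-- The plain travel `D` of `A` is `k`-neighborly: there is a set `R` of columns such that
the top travel of `A_R` follows exactly the path `D` and `A_R` is a `k`-neighborly matrix. -/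
def IsNeighborlyTravel (A : ℕ → ℕ → ℤ) (r n k : ℕ) (D : Finset ℕ) : Prop :=
  ∃ R : Finset ℕ, R ⊆ Finset.Icc 1 n ∧ ttFollows (reorient A R) n D ∧
    IsNeighborly (reorient A R) r n k

theorem rowChange_iff (A : ℕ → ℕ → ℤ) (n i c d : ℕ) :
    rowChange A n i c = some d ↔
      (c < d ∧ d ≤ n ∧ A i d ≠ A i c ∧ ∀ j, c < j → j < d → A i j = A i c) := by
  unfold rowChange
  rw [List.find?_range_eq_some]
  simp
  grind

theorem ttEntry_local (A B : ℕ → ℕ → ℤ) (n : ℕ) (i : ℕ) : ∀ c : ℕ,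
    (∀ i j, j ≤ c → A i j = B i j) → ttEntry A n i = some c → ttEntry B n i = some c := by
  induction i with
  | zero => intro c _ h; simp [ttEntry] at h
  | succ i ih =>
    intro c hAB h
    cases i with
    | zero => simpa [ttEntry] using h
    | succ i =>
      simp only [ttEntry, Option.bind_eq_some_iff] at h ⊢
      obtain ⟨b, hb, hr⟩ := h
      rw [rowChange_iff] at hr
      obtain ⟨h1, h2, h3, h4⟩ := hr
      refine ⟨b, ih b (fun i j hj => hAB i j (by omega)) hb, ?_⟩
      rw [rowChange_iff]
      refine ⟨h1, h2, ?_, ?_⟩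
      · rw [← hAB _ _ le_rfl, ← hAB _ _ h1.le]; exact h3
      · intro j hj hj'
        rw [← hAB _ _ hj'.le, ← hAB _ _ h1.le]; exact h4 j hj hj'

/-- With one negated column one can pass two rows within three columns. -/
theorem two_rows (B : ℕ → ℕ → ℤ) (n i c : ℕ) (hc : c + 3 ≤ n)
    (hB : ∀ r j, i ≤ r → r ≤ i + 1 → c ≤ j → j ≤ c + 3 → B r j = 1 ∨ B r j = -1) :
    ∃ (T : Finset ℕ) (c1 c2 : ℕ), T ⊆ Finset.Ioc c c2 ∧ T.card ≤ 1 ∧ c2 ≤ c + 3 ∧ c < c1 ∧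
      rowChange (reorient B T) n i c = some c1 ∧
      rowChange (reorient B T) n (i + 1) c1 = some c2 := by
  have x0 := hB i c (by omega) (by omega) (by omega) (by omega)
  have x1 := hB i (c+1) (by omega) (by omega) (by omega) (by omega)
  have x2 := hB i (c+2) (by omega) (by omega) (by omega) (by omega)
  have y1 := hB (i+1) (c+1) (by omega) (by omega) (by omega) (by omega)
  have y2 := hB (i+1) (c+2) (by omega) (by omega) (by omega) (by omega)
  have y3 := hB (i+1) (c+3) (by omega) (by omega) (by omega) (by omega)
  simp only [rowChange_iff]
  have e1 : ∀ a j : ℕ, a < j → j < a + 1 → False := by omega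
  have e2 : ∀ a j : ℕ, a < j → j < a + 2 → j = a + 1 := by omega
  by_cases h1 : B i (c+1) = B i c
  · by_cases h2 : B (i+1) (c+2) = B (i+1) (c+1)
    · refine ⟨{c+1}, c+1, c+2, ?_, ?_, ?_⟩ <;> simp [reorient]
      grind
    · by_cases h3 : B (i+1) (c+3) = B (i+1) (c+1)
      · refine ⟨{c+1}, c+1, c+3, ?_, ?_, ?_⟩ <;> simp [reorient]
        grind
      · by_cases h4 : B i (c+2) = B i c
        · refine ⟨{c+2}, c+2, c+3, ?_, ?_, ?_⟩ <;> simp [reorient]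
          grind
        · refine ⟨{c+3}, c+2, c+3, ?_, ?_, ?_⟩ <;> simp [reorient]
          grind
  · by_cases h2 : B (i+1) (c+2) = B (i+1) (c+1)
    · refine ⟨{c+2}, c+1, c+2, ?_, ?_, ?_⟩ <;> simp [reorient]
      grind
    · refine ⟨∅, c+1, c+2, ?_, ?_, ?_⟩ <;> simp [reorient]
      grind

theorem greedy (k n : ℕ) (hn : 3 * k + 1 ≤ n)
    (A : ℕ → ℕ → ℤ) (hA : IsSignMatrix (2 * k) n A) (m : ℕ) (hm : m ≤ k) :
    ∃ (S : Finset ℕ) (c : ℕ), S ⊆ Finset.Icc 2 c ∧ S.card ≤ m ∧ 1 ≤ c ∧ c ≤ 3 * m + 1 ∧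
      ttEntry (reorient A S) n (2 * m + 1) = some c := by
  induction m with
  | zero => exact ⟨∅, 1, by simp, by simp, by simp, by simp, by simp [ttEntry]⟩
  | succ m ih =>
    obtain ⟨S, c, hS, hcard, hc1, hc, he⟩ := ih (by omega)
    obtain ⟨T, c1, c2, hT, hTc, hc2, hcc, hr1, hr2⟩ :=
      two_rows (reorient A S) n (2 * m + 1) c (by omega) (by
        intro r j h1 h2 h3 h4
        have := hA r j (by omega) (by omega) (by omega) (by omega)
        unfold reorient
        split <;> omega)
    have hST : reorient A (S ∪ T) = reorient (reorient A S) T := by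
      funext i j
      have : j ∈ S → j ∈ T → False := by
        intro h1 h2
        have a := Finset.mem_Icc.1 (hS h1)
        have b := Finset.mem_Ioc.1 (hT h2)
        omega
      simp only [reorient, Finset.mem_union]
      grind
    have h12 : c1 < c2 := ((rowChange_iff _ _ _ _ _).1 hr2).1
    refine ⟨S ∪ T, c2, ?_, ?_, by omega, by omega, ?_⟩
    · intro j hj
      rw [Finset.mem_Icc]
      rcases Finset.mem_union.1 hj with h | h
      · have a := Finset.mem_Icc.1 (hS h); omega
      · have b := Finset.mem_Ioc.1 (hT h); omega
    · have := Finset.card_union_le S T; omega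
    · rw [hST]
      have hl : ttEntry (reorient (reorient A S) T) n (2 * m + 1) = some c := by
        refine ttEntry_local _ _ n _ c ?_ he
        intro i j hj
        have : j ∉ T := by
          intro h
          have b := Finset.mem_Ioc.1 (hT h); omega
        conv_rhs => rw [reorient]
        simp [this]
      have h2 : 2 * (m + 1) + 1 = 2 * m + 1 + 2 := by ring
      rw [h2]
      simp only [ttEntry] at hl ⊢
      simp only [hl, Option.bind_some, hr1, hr2]

/-- For `k ≥ 1`, `n ≥ 3k+1` and any `(2k) × n` sign matrix `A`, there is a
set `S ⊆ {2,…,n}` of columns with `|S| ≤ k` such that the top travel of `A_S` is positive. -/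
theorem statement_0 (k n : ℕ) (hk : 1 ≤ k) (hn : 3 * k + 1 ≤ n)
    (A : ℕ → ℕ → ℤ) (hA : IsSignMatrix (2 * k) n A) :
    ∃ S : Finset ℕ, S ⊆ Finset.Icc 2 n ∧ S.card ≤ k ∧
      ttPositive (reorient A S) (2 * k) n := by
  obtain ⟨S, c, hS, hcard, _, hc, he⟩ := greedy k n hn A hA k le_rfl
  refine ⟨S, hS.trans (Finset.Icc_subset_Icc_right (by omega)), hcard, ?_⟩
  simp [ttPositive, he]
end

section
/- Let k ≥ 1, r = 2k+2 and n ≥ r+1 be integers, let A be an r×n sign matrix, and fix j ≥ 2. Suppose that for every plain travel P of A whose downward moves all occur at columns ≥ j (possibly no downward moves at all) there exists a set S ⊆ {1, …, j−1} of columns with |S| ≤ k such that, for every set R of columns for which the top travel of A_R follows the path P, the top travel of (A_R)_S reaches row r at some column ≤ j−1. Then at most one plain travel of A whose downward moves all occur at columns ≥ j is k-neighborly. -/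
/-- The sign with which column `x` is multiplied in `reorient A S`. -/
def colSgn (S : Finset ℕ) (x : ℕ) : ℤ := if x ∈ S then -1 else 1

theorem reorient_eq (A : ℕ → ℕ → ℤ) (S : Finset ℕ) (i x : ℕ) :
    reorient A S i x = colSgn S x * A i x := by
  unfold reorient colSgn; split_ifs <;> simp

theorem colSgn_sq (S : Finset ℕ) (x : ℕ) : colSgn S x * colSgn S x = 1 := by
  unfold colSgn; split_ifs <;> simp

theorem rowChange_some {A : ℕ → ℕ → ℤ} {n i c d : ℕ} :
    rowChange A n i c = some d ↔
      c < d ∧ d ≤ n ∧ A i d ≠ A i c ∧ ∀ x, c < x → x < d → A i x = A i c := by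
  unfold rowChange
  rw [List.find?_range_eq_some]
  simp only [decide_eq_true_eq, List.mem_range, Bool.not_eq_true', decide_eq_false_iff_not]
  constructor
  · rintro ⟨⟨h1, h2⟩, h3, h4⟩
    refine ⟨h1, by omega, h2, fun x hx hxd => ?_⟩
    have := h4 x hxd
    by_contra h
    exact this ⟨hx, h⟩
  · rintro ⟨h1, h2, h3, h4⟩
    refine ⟨⟨h1, h3⟩, by omega, fun x hx h => h.2 (h4 x h.1 hx)⟩

theorem rowChange_none {A : ℕ → ℕ → ℤ} {n i c : ℕ} :
    rowChange A n i c = none ↔ ∀ x, c < x → x ≤ n → A i x = A i c := by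
  unfold rowChange
  rw [List.find?_eq_none]
  simp only [decide_eq_true_eq, List.mem_range]
  constructor
  · intro h x hx hn
    by_contra h'
    exact h x (by omega) ⟨hx, h'⟩
  · intro h x hx hh
    exact hh.2 (h x hh.1 (by omega))

theorem ttEntry_bounds {A : ℕ → ℕ → ℤ} {n : ℕ} (hn : 1 ≤ n) :
    ∀ i c, ttEntry A n i = some c → 1 ≤ c ∧ c ≤ n
  | 0, c, h => by simp [ttEntry] at h
  | 1, c, h => by simp [ttEntry] at h; omega
  | i + 2, c, h => by
    simp only [ttEntry, Option.bind_eq_some_iff] at h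
    obtain ⟨d, hd, h⟩ := h
    have := rowChange_some.1 h
    have := ttEntry_bounds hn (i + 1) d hd
    omega

theorem ttEntry_transfer {B B' : ℕ → ℕ → ℤ} {n m : ℕ} {σ : ℤ} (hn : 1 ≤ n) (hσ : σ ≠ 0)
    (hB : ∀ i x, 1 ≤ x → x ≤ m → B' i x = σ * B i x) :
    ∀ i c, c ≤ m → ttEntry B n i = some c → ttEntry B' n i = some c
  | 0, c, _, h => by simp [ttEntry] at h
  | 1, c, _, h => by simpa [ttEntry] using h
  | i + 2, c, hc, h => by
    simp only [ttEntry, Option.bind_eq_some_iff] at h ⊢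
    obtain ⟨d, hd, h⟩ := h
    obtain ⟨h1, h2, h3, h4⟩ := rowChange_some.1 h
    have hb := ttEntry_bounds hn (i + 1) d hd
    refine ⟨d, ttEntry_transfer hn hσ hB (i + 1) d (by omega) hd, rowChange_some.2
      ⟨h1, h2, ?_, fun x hx hxc => ?_⟩⟩
    · rw [hB _ _ (by omega) hc, hB _ _ hb.1 (by omega)]
      exact fun h => h3 (mul_left_cancel₀ hσ h)
    · rw [hB _ _ (by omega) (by omega), hB _ _ hb.1 (by omega), h4 x hx hxc]

theorem ttEntry_none_add {A : ℕ → ℕ → ℤ} {n i : ℕ} (h : ttEntry A n (i + 1) = none) (t : ℕ) :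
    ttEntry A n (i + 1 + t) = none := by
  induction t with
  | zero => exact h
  | succ t ih =>
    have e : i + 1 + (t + 1) = (i + t) + 2 := by omega
    have e' : i + 1 + t = i + t + 1 := by omega
    rw [e'] at ih
    rw [e]
    simp [ttEntry, ih]

theorem ttFollows_mem {A : ℕ → ℕ → ℤ} {n : ℕ} {D : Finset ℕ} (h : ttFollows A n D) (c : ℕ) :
    c ∈ D ↔ ∃ i, 2 ≤ i ∧ ttEntry A n i = some c := by
  rw [h.2]
  constructor
  · rintro ⟨i, h1, _, h2⟩
    exact ⟨i, h1, h2⟩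
  · rintro ⟨i, h1, h2⟩
    refine ⟨i, h1, ?_, h2⟩
    by_contra hi
    have := ttEntry_none_add (i := D.card + 1) h.1 (i - (D.card + 2))
    rw [show D.card + 1 + 1 + (i - (D.card + 2)) = i by omega, h2] at this
    simp at this

theorem ttFollows_row_one {B : ℕ → ℕ → ℤ} {n j : ℕ} {D : Finset ℕ} (h : ttFollows B n D)
    (hD : ∀ c ∈ D, j ≤ c) (x : ℕ) (hx : 1 ≤ x) (hxj : x < j) (hxn : x ≤ n) :
    B 1 x = B 1 1 := by
  rcases Nat.eq_or_lt_of_le hx with rfl | hx'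
  · rfl
  have e : ttEntry B n 2 = rowChange B n 1 1 := by simp [ttEntry]
  cases hh : rowChange B n 1 1 with
  | none => exact rowChange_none.1 hh x hx' hxn
  | some d =>
    have hd : d ∈ D := (ttFollows_mem h d).2 ⟨2, le_rfl, by rw [e, hh]⟩
    exact (rowChange_some.1 hh).2.2.2 x hx' (lt_of_lt_of_le hxj (hD d hd))

theorem row_const_of_not_positive {B : ℕ → ℕ → ℤ} {r n c : ℕ} (hr : 1 ≤ r)
    (hc : ttEntry B n r = some c) (h : ¬ ttPositive B r n) (x : ℕ) (hx : c < x) (hxn : x ≤ n) :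
    B r x = B r c := by
  obtain ⟨q, rfl⟩ : ∃ q, r = q + 1 := ⟨r - 1, by omega⟩
  have : rowChange B n (q + 1) c = none := by
    simpa [ttPositive, ttEntry, hc] using h
  exact rowChange_none.1 this x hx hxn

/-- Let `k ≥ 1`, `r = 2k+2`, `n ≥ r+1`, `A` an `r × n` sign matrix and `j ≥ 2`.
Suppose that for every plain travel `P` of `A` whose downward moves all occur at columns `≥ j`
there is a set `S ⊆ {1,…,j-1}` with `|S| ≤ k` such that, for every set `R` of columns for which
the top travel of `A_R` follows `P`, the top travel of `(A_R)_S` reaches row `r` at some column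
`≤ j-1`.  Then at most one plain travel of `A` with all downward moves at columns `≥ j` is
`k`-neighborly. -/
theorem statement_2 (k r n : ℕ) (hk : 1 ≤ k) (hr : r = 2 * k + 2) (hn : r + 1 ≤ n)
    (A : ℕ → ℕ → ℤ) (hA : IsSignMatrix r n A) (j : ℕ) (hj : 2 ≤ j)
    (H : ∀ D : Finset ℕ, IsPlainTravel r n D → (∀ c ∈ D, j ≤ c) →
      ∃ S : Finset ℕ, S ⊆ Finset.Icc 1 (j - 1) ∧ S.card ≤ k ∧
        ∀ R : Finset ℕ, R ⊆ Finset.Icc 1 n → ttFollows (reorient A R) n D →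
          ∃ c, c ≤ j - 1 ∧ ttEntry (reorient (reorient A R) S) n r = some c) :
    ∀ D₁ D₂ : Finset ℕ,
      IsPlainTravel r n D₁ → (∀ c ∈ D₁, j ≤ c) → IsNeighborlyTravel A r n k D₁ →
      IsPlainTravel r n D₂ → (∀ c ∈ D₂, j ≤ c) → IsNeighborlyTravel A r n k D₂ →
      D₁ = D₂ := by
  intro D₁ D₂ hP₁ hj₁ hN₁ hP₂ hj₂ hN₂
  by_cases hjn : n < j
  · have key : ∀ D, IsPlainTravel r n D → (∀ c ∈ D, j ≤ c) → D = ∅ := by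
      intro D hP hD
      refine Finset.eq_empty_of_forall_notMem fun c hc => ?_
      have h1 := Finset.mem_Icc.1 (hP.1 hc)
      have h2 := hD c hc
      omega
    rw [key D₁ hP₁ hj₁, key D₂ hP₂ hj₂]
  push Not at hjn
  have hn1 : 1 ≤ n := by omega
  obtain ⟨S, hS, hSk, hSR⟩ := H D₁ hP₁ hj₁
  obtain ⟨R₁, hR₁, hF₁, hNb₁⟩ := hN₁
  obtain ⟨R₂, hR₂, hF₂, hNb₂⟩ := hN₂
  obtain ⟨c, hcj, hc⟩ := hSR R₁ hR₁ hF₁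
  have hcb := ttEntry_bounds hn1 r c hc
  have hA0 : ∀ i x, 1 ≤ i → i ≤ r → 1 ≤ x → x ≤ n → A i x ≠ 0 := by
    intro i x h1 h2 h3 h4
    rcases hA i x h1 h2 h3 h4 with h | h <;> rw [h] <;> norm_num
  have hSn : S ⊆ Finset.Icc 1 n := hS.trans (Finset.Icc_subset_Icc le_rfl (by omega))
  -- the relative sign
  obtain ⟨σ, hσ⟩ : ∃ σ, σ = colSgn R₂ 1 * colSgn R₁ 1 := ⟨_, rfl⟩
  have hσ2 : σ * σ = 1 := by
    have h1 := colSgn_sq R₁ 1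
    have h2 := colSgn_sq R₂ 1
    rw [hσ]
    linear_combination h1 * (colSgn R₂ 1 * colSgn R₂ 1) + h2
  have hσ0 : σ ≠ 0 := by
    rintro h
    rw [h] at hσ2
    norm_num at hσ2
  have hlow : ∀ x, 1 ≤ x → x ≤ j - 1 → colSgn R₂ x = σ * colSgn R₁ x := by
    intro x h1 h2
    have e1 := ttFollows_row_one hF₁ hj₁ x h1 (by omega) (by omega)
    have e2 := ttFollows_row_one hF₂ hj₂ x h1 (by omega) (by omega)
    rw [reorient_eq, reorient_eq] at e1 e2
    have s1 := colSgn_sq R₁ 1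
    apply mul_right_cancel₀ (hA0 1 x le_rfl (by omega) h1 (by omega))
    rw [e2, mul_assoc, e1, hσ]
    linear_combination -(colSgn R₂ 1 * A 1 1) * s1
  have hrelS : ∀ i x, 1 ≤ x → x ≤ j - 1 →
      reorient (reorient A R₂) S i x = σ * reorient (reorient A R₁) S i x := by
    intro i x h1 h2
    simp only [reorient_eq]
    rw [hlow x h1 h2]
    ring
  have hc2 := ttEntry_transfer hn1 hσ0 hrelS r c hcj hc
  have hhigh : ∀ x, j ≤ x → x ≤ n → colSgn R₂ x = σ * colSgn R₁ x := by
    intro x h1 h2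
    have e1 := row_const_of_not_positive (by omega) hc (hNb₁ S hSn hSk) x (by omega) h2
    have e2 := row_const_of_not_positive (by omega) hc2 (hNb₂ S hSn hSk) x (by omega) h2
    have e3 := hrelS r c hcb.1 hcj
    rw [← e1, ← e2] at e3
    simp only [reorient_eq] at e3
    have s := colSgn_sq S x
    apply mul_right_cancel₀ (hA0 r x (by omega) le_rfl (by omega) h2)
    linear_combination colSgn S x * e3 -
      (colSgn R₂ x * A r x - σ * (colSgn R₁ x * A r x)) * s
  have hall : ∀ x, 1 ≤ x → x ≤ n → colSgn R₂ x = σ * colSgn R₁ x := by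
    intro x h1 h2
    by_cases hx : x ≤ j - 1
    · exact hlow x h1 hx
    · exact hhigh x (by omega) h2
  have r12 : ∀ i x, 1 ≤ x → x ≤ n → reorient A R₂ i x = σ * reorient A R₁ i x := by
    intro i x h1 h2
    rw [reorient_eq, reorient_eq, hall x h1 h2]
    ring
  have r21 : ∀ i x, 1 ≤ x → x ≤ n → reorient A R₁ i x = σ * reorient A R₂ i x := by
    intro i x h1 h2
    rw [r12 i x h1 h2]
    linear_combination -(reorient A R₁ i x) * hσ2
  ext d
  rw [ttFollows_mem hF₁, ttFollows_mem hF₂]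
  constructor
  · rintro ⟨i, h1, h2⟩
    exact ⟨i, h1, ttEntry_transfer hn1 hσ0 r12 i d (ttEntry_bounds hn1 i d h2).2 h2⟩
  · rintro ⟨i, h1, h2⟩
    exact ⟨i, h1, ttEntry_transfer hn1 hσ0 r21 i d (ttEntry_bounds hn1 i d h2).2 h2⟩
end

section
/- Let k ≥ 1, r = 2k+2 and n ≥ 6k+2 be integers. Then every r×n sign matrix has at most n k-neighborly plain travels. -/
namespace TravelProof

/-- Signed sum of `e` along a list of columns, the bonds being read off consecutive rows. -/
def sgnSum (A : ℕ → ℕ → ℤ) (e : ℕ → ℤ) : ℕ → List ℕ → ℤ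
  | _, [] => 0
  | _, [j] => e j
  | i, j :: j' :: L => e j - A i j * A i j' * sgnSum A e (i + 1) (j' :: L)

/-- Consecutive columns of the list have opposite entries in consecutive rows. -/
def Alt (B : ℕ → ℕ → ℤ) : ℕ → List ℕ → Prop
  | _, [] => True
  | _, [_] => True
  | i, j :: j' :: L => B i j = - B i j' ∧ Alt B (i + 1) (j' :: L)

def Sgn (x : ℤ) : Prop := x = 1 ∨ x = -1

lemma Sgn.mul {x y : ℤ} (hx : Sgn x) (hy : Sgn y) : Sgn (x * y) := by
  rcases hx with rfl | rfl <;> rcases hy with rfl | rfl <;> simp [Sgn]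

lemma Sgn.neg {x : ℤ} (hx : Sgn x) : Sgn (-x) := by
  rcases hx with rfl | rfl <;> simp [Sgn]

lemma Sgn.sq {x : ℤ} (hx : Sgn x) : x * x = 1 := by
  rcases hx with rfl | rfl <;> simp

lemma Sgn.prod {F : Finset ℕ} {w : ℕ → ℤ} (hw : ∀ j, Sgn (w j)) : Sgn (∏ j ∈ F, w j) := by
  induction F using Finset.induction_on with
  | empty => simp [Sgn]
  | insert a s ha ih => rw [Finset.prod_insert ha]; exact (hw a).mul ih

lemma split {A : ℕ → ℕ → ℤ} (hA : ∀ i j, Sgn (A i j)) (P Q : List ℕ) (hP : P ≠ []) (hQ : Q ≠ [])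
    (i : ℕ) : ∃ t : ℤ, Sgn t ∧ ∀ e, sgnSum A e i (P ++ Q) =
      sgnSum A e i P + t * sgnSum A e (i + P.length) Q := by
  induction P generalizing i with
  | nil => exact absurd rfl hP
  | cons j P ih =>
    cases P with
    | nil =>
      cases Q with
      | nil => exact absurd rfl hQ
      | cons q Q =>
        refine ⟨-(A i j * A i q), ((hA i j).mul (hA i q)).neg, fun e => ?_⟩
        simp [sgnSum]; ring
    | cons j' P =>
      obtain ⟨t, ht, h⟩ := ih (by simp) (i + 1)
      refine ⟨-(A i j * A i j') * t, (((hA i j).mul (hA i j')).neg).mul ht, fun e => ?_⟩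
      have := h e
      simp only [List.cons_append, sgnSum, List.length_cons] at this ⊢
      rw [this, show i + 1 + (P.length + 1) = i + (P.length + 1 + 1) by ring]
      ring

lemma repr {A : ℕ → ℕ → ℤ} (hA : ∀ i j, Sgn (A i j)) (L : List ℕ) (hL : L.Pairwise (· < ·))
    (i : ℕ) : ∃ s : ℕ → ℤ, (∀ j, Sgn (s j)) ∧ Alt (fun i j => s j * A i j) i L ∧
      (∀ e, sgnSum A e i L = ∑ j ∈ L.toFinset, s j * e j) ∧ (∀ j, L.head? = some j → s j = 1) := by
  have altcongr : ∀ (L : List ℕ) (i : ℕ) (s s' : ℕ → ℤ) (c : ℤ), (∀ j ∈ L, s' j = c * s j) →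
      Alt (fun i j => s j * A i j) i L → Alt (fun i j => s' j * A i j) i L := by
    intro L
    induction L with
    | nil => intros; trivial
    | cons a L ih =>
      intro i s s' c h1 h2
      cases L with
      | nil => trivial
      | cons b L =>
        refine ⟨?_, ih _ s s' c (fun j hj => h1 j (List.mem_cons_of_mem _ hj)) h2.2⟩
        have := h2.1
        simp only at this ⊢
        rw [h1 a (by simp), h1 b (by simp), mul_assoc, this]; ring
  induction L generalizing i with
  | nil => exact ⟨fun _ => 1, by simp [Sgn], trivial, by simp [sgnSum], by simp⟩
  | cons j L ih =>
    cases L with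
    | nil => exact ⟨fun _ => 1, by simp [Sgn], trivial, by simp [sgnSum], by simp⟩
    | cons j' L =>
      obtain ⟨s, hs, ha, hsum, hh⟩ := ih (List.Pairwise.of_cons hL) (i + 1)
      have hlt : ∀ b ∈ j' :: L, j < b := (List.pairwise_cons.1 hL).1
      have hnot : j ∉ (j' :: L).toFinset := by
        intro h; exact absurd (hlt j (List.mem_toFinset.1 h)) (lt_irrefl _)
      have hs1 : s j' = 1 := hh j' (by simp)
      set c : ℤ := -(A i j * A i j') with hc
      have hcs : Sgn c := ((hA i j).mul (hA i j')).neg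
      refine ⟨fun b => if b = j then 1 else c * s b, ?_, ?_, ?_, ?_⟩
      · intro b
        dsimp only
        split_ifs
        · simp [Sgn]
        · exact hcs.mul (hs b)
      · constructor
        · have hne : j' ≠ j := (hlt j' (by simp)).ne'
          simp only [if_true, if_neg hne, hs1, hc]
          have := (hA i j').sq
          linear_combination -(A i j) * this
        · apply altcongr _ _ s _ c _ ha
          intro b hb
          simp [(hlt b hb).ne']
      · intro e
        rw [List.toFinset_cons, Finset.sum_insert hnot]
        simp only [sgnSum, if_true, hsum, one_mul]
        rw [sub_eq_add_neg, ← neg_mul, ← hc, Finset.mul_sum]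
        congr 1
        apply Finset.sum_congr rfl
        intro b hb
        have : b ≠ j := fun h => hnot (h ▸ hb)
        simp [this, mul_assoc]
      · intro b hb
        simp at hb
        simp [hb]

lemma sum_mod (F : Finset ℕ) (w : ℕ → ℤ) (hw : ∀ j, Sgn (w j)) :
    (4 : ℤ) ∣ ∑ j ∈ F, w j - ((F.card : ℤ) - 1 + ∏ j ∈ F, w j) := by
  induction F using Finset.induction_on with
  | empty => simp
  | insert a s ha ih =>
    rw [Finset.sum_insert ha, Finset.prod_insert ha, Finset.card_insert_of_notMem ha]
    have hp : Sgn (∏ j ∈ s, w j) := Sgn.prod hw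
    push_cast
    rcases hw a with h | h <;> rcases hp with h' | h' <;> rw [h'] at ih <;> rw [h, h'] <;> omega

lemma prod_rel {A : ℕ → ℕ → ℤ} (hA : ∀ i j, Sgn (A i j)) (L : List ℕ) (hL : L.Pairwise (· < ·))
    (i : ℕ) (e e' : ℕ → ℤ) (he : ∀ j, Sgn (e j)) (he' : ∀ j, Sgn (e' j))
    (h : Sgn (sgnSum A e i L)) (h' : Sgn (sgnSum A e' i L)) :
    sgnSum A e i L * sgnSum A e' i L = ∏ j ∈ L.toFinset, (e j * e' j) := by
  obtain ⟨s, hs, -, hsum, -⟩ := repr hA L hL i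
  have h1 := sum_mod L.toFinset (fun j => s j * e j) (fun j => (hs j).mul (he j))
  have h2 := sum_mod L.toFinset (fun j => s j * e' j) (fun j => (hs j).mul (he' j))
  rw [← hsum, Finset.prod_mul_distrib] at h1 h2
  rw [Finset.prod_mul_distrib]
  have a1 : Sgn (∏ j ∈ L.toFinset, s j) := Sgn.prod hs
  have a2 : Sgn (∏ j ∈ L.toFinset, e j) := Sgn.prod he
  have a3 : Sgn (∏ j ∈ L.toFinset, e' j) := Sgn.prod he'
  generalize (∏ j ∈ L.toFinset, s j) = x1 at *
  generalize (∏ j ∈ L.toFinset, e j) = x2 at *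
  generalize (∏ j ∈ L.toFinset, e' j) = x3 at *
  generalize sgnSum A e i L = y1 at *
  generalize sgnSum A e' i L = y2 at *
  generalize (L.toFinset.card : ℤ) = c at *
  unfold Sgn at *
  rcases h with h | h <;> rcases h' with h' | h' <;> rcases a1 with a1 | a1 <;>
    rcases a2 with a2 | a2 <;> rcases a3 with a3 | a3 <;> subst_vars <;> omega

/-- Existence of an alternating chain forces the top travel to reach far. -/
lemma travel {B : ℕ → ℕ → ℤ} {n : ℕ} (L : List ℕ) (j i c : ℕ) (hi : 1 ≤ i)
    (hc : ttEntry B n i = some c) (hcj : c ≤ j) (hs : (j :: L).Pairwise (· < ·))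
    (hn : ∀ b ∈ j :: L, b ≤ n) (hne : ∀ i' b, i ≤ i' → i' < i + L.length → b ∈ j :: L → B i' b ≠ 0)
    (hA : Alt B i (j :: L)) : (ttEntry B n (i + L.length)).isSome := by
  induction L generalizing j i c with
  | nil => simp [hc]
  | cons j' L ih =>
    have hjj : j < j' := (List.pairwise_cons.1 hs).1 j' (by simp)
    have hj'n : j' ≤ n := hn j' (by simp)
    have hopp : B i j = - B i j' := hA.1
    have hnz : B i j' ≠ 0 := hne i j' le_rfl (by simp) (by simp)
    obtain ⟨d, hcd, hdj, hd⟩ : ∃ d, c < d ∧ d ≤ j' ∧ B i d ≠ B i c := by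
      by_cases h : B i j' = B i c
      · refine ⟨j, ?_, hjj.le, ?_⟩
        · rcases hcj.lt_or_eq with h' | h'
          · exact h'
          · subst h'; omega
        · omega
      · exact ⟨j', by omega, le_rfl, h⟩
    have hsome : ∃ c', rowChange B n i c = some c' ∧ c' ≤ j' := by
      unfold rowChange
      cases hf : (List.range (n + 1)).find? (fun c' => decide (c < c' ∧ B i c' ≠ B i c)) with
      | none =>
        rw [List.find?_eq_none] at hf
        exact absurd (hf d (by simp; omega)) (by simp [hcd, hd])
      | some c' =>
        refine ⟨c', rfl, ?_⟩
        rw [List.find?_range_eq_some] at hf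
        by_contra hlt
        have := hf.2.2 d (by omega)
        simp [hcd, hd] at this
    obtain ⟨c', hc', hle⟩ := hsome
    have hnext : ttEntry B n (i + 1) = some c' := by
      obtain ⟨m, rfl⟩ : ∃ m, i = m + 1 := ⟨i - 1, by omega⟩
      rw [ttEntry, hc]; exact hc'
    have := ih j' (i + 1) c' (by omega) hnext hle (List.Pairwise.of_cons hs)
      (fun b hb => hn b (List.mem_cons_of_mem _ hb))
      (fun i' b h1 h2 h3 => hne i' b (by omega) (by simp; omega) (List.mem_cons_of_mem _ h3)) hA.2
    rw [List.length_cons, show i + (L.length + 1) = i + 1 + L.length by ring]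
    exact this

end TravelProof

namespace TravelProof

lemma alt_transfer {B B' : ℕ → ℕ → ℤ} (c : ℤ) (L : List ℕ) (i : ℕ)
    (h : ∀ i' j, i ≤ i' → i' + 1 < i + L.length → j ∈ L → B' i' j = c * B i' j)
    (hB : Alt B i L) : Alt B' i L := by
  induction L generalizing i with
  | nil => trivial
  | cons a L ih =>
    cases L with
    | nil => trivial
    | cons b L =>
      refine ⟨?_, ih (i + 1) (fun i' j h1 h2 h3 => h i' j (by omega) ?_ (List.mem_cons_of_mem _ h3)) hB.2⟩
      · have := hB.1
        rw [h i a le_rfl (by simp) (by simp), h i b le_rfl (by simp) (by simp), this]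
        ring
      · simp only [List.length_cons] at h2 ⊢; omega

/-- Sign vector of a reorientation. -/
def eR (R : Finset ℕ) (j : ℕ) : ℤ := if j ∈ R then -1 else 1

lemma eR_sgn (R : Finset ℕ) (j : ℕ) : Sgn (eR R j) := by
  unfold eR; split_ifs <;> simp [Sgn]

lemma reorient_eq (A : ℕ → ℕ → ℤ) (R : Finset ℕ) (i j : ℕ) :
    reorient A R i j = eR R j * A i j := by
  unfold reorient eR; split_ifs <;> simp

/-- The matrix extended by ones outside of its range. -/
def ext (r n : ℕ) (A : ℕ → ℕ → ℤ) (i j : ℕ) : ℤ :=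
  if 1 ≤ i ∧ i ≤ r ∧ 1 ≤ j ∧ j ≤ n then A i j else 1

lemma ext_sgn {r n : ℕ} {A : ℕ → ℕ → ℤ} (hA : IsSignMatrix r n A) (i j : ℕ) :
    Sgn (ext r n A i j) := by
  unfold ext; split_ifs with h
  · exact hA i j h.1 h.2.1 h.2.2.1 h.2.2.2
  · simp [Sgn]

/-- Balancedness on all sorted lists of length `2k+3`. -/
def Bal (A : ℕ → ℕ → ℤ) (n k : ℕ) (e : ℕ → ℤ) : Prop :=
  ∀ L : List ℕ, L.Pairwise (· < ·) → (∀ b ∈ L, 1 ≤ b ∧ b ≤ n) → L.length = 2 * k + 3 →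
    Sgn (sgnSum A e 1 L)

lemma not_small {k n : ℕ} {A : ℕ → ℕ → ℤ} (hA : IsSignMatrix (2 * k + 2) n A) {R : Finset ℕ}
    (hR : IsNeighborly (reorient A R) (2 * k + 2) n k) (L : List ℕ) (hL : L.Pairwise (· < ·))
    (hb : ∀ b ∈ L, 1 ≤ b ∧ b ≤ n) (hlen : L.length = 2 * k + 3) (s : ℕ → ℤ) (hs : ∀ j, Sgn (s j))
    (halt : Alt (fun i j => s j * ext (2 * k + 2) n A i j) 1 L) (c : ℤ) (hc : Sgn c) :
    k < (L.toFinset.filter (fun j => s j * eR R j = - c)).card := by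
  by_contra hcard
  set N := L.toFinset.filter (fun j => s j * eR R j = - c) with hN
  refine hR N ?_ (by omega) ?_
  · intro j hj
    have := hb j (List.mem_toFinset.1 (Finset.mem_filter.1 hj).1)
    simp [this]
  · have key : ∀ i j, 1 ≤ i → i ≤ 2 * k + 2 → j ∈ L →
        reorient (reorient A R) N i j = c * (s j * ext (2 * k + 2) n A i j) := by
      intro i j h1 h2 hj
      have hj' := hb j hj
      rw [reorient_eq, reorient_eq, ext, if_pos ⟨h1, h2, hj'.1, hj'.2⟩]
      have hv : eR N j * eR R j = c * s j := by
        have hsj := hs j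
        have hej := eR_sgn R j
        by_cases hmem : j ∈ N
        · have h3 := (Finset.mem_filter.1 hmem).2
          have h4 : eR N j = -1 := by simp [eR, hmem]
          rw [h4]
          rcases hsj with h | h <;> rcases hej with h' | h' <;> rcases hc with h'' | h'' <;>
            rw [h, h', h''] at h3 <;> rw [h, h', h''] <;> revert h3 <;> norm_num
        · have h3 : ¬ s j * eR R j = -c := fun h =>
            hmem (Finset.mem_filter.2 ⟨List.mem_toFinset.2 hj, h⟩)
          have h4 : eR N j = 1 := by simp [eR, hmem]
          rw [h4]
          rcases hsj with h | h <;> rcases hej with h' | h' <;> rcases hc with h'' | h'' <;>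
            rw [h, h', h''] at h3 <;> rw [h, h', h''] <;> revert h3 <;> norm_num
      rw [← mul_assoc, hv]; ring
    have halt' : Alt (reorient (reorient A R) N) 1 L :=
      alt_transfer c L 1 (fun i' j h1 h2 h3 => key i' j h1 (by omega) h3) halt
    cases L with
    | nil => simp at hlen
    | cons j L =>
      have hl : L.length = 2 * k + 2 := by simpa using hlen
      have := travel L j 1 1 le_rfl (by rfl) (hb j (by simp)).1 hL (fun b h => (hb b h).2)
        (fun i' b h1 h2 h3 => by
          rw [key i' b h1 (by omega) h3]
          have : Sgn (c * (s b * ext (2 * k + 2) n A i' b)) := hc.mul ((hs b).mul (ext_sgn hA _ _))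
          rcases this with h | h <;> rw [h] <;> norm_num) halt'
      rw [hl] at this
      unfold ttPositive
      rwa [show 2 * k + 2 + 1 = 1 + (2 * k + 2) by ring]

lemma balance {k n : ℕ} {A : ℕ → ℕ → ℤ} (hA : IsSignMatrix (2 * k + 2) n A) {R : Finset ℕ}
    (hR : IsNeighborly (reorient A R) (2 * k + 2) n k) :
    Bal (ext (2 * k + 2) n A) n k (eR R) := by
  intro L hL hb hlen
  obtain ⟨s, hs, halt, hsum, -⟩ := repr (ext_sgn hA) L hL 1
  have h1 := not_small hA hR L hL hb hlen s hs halt 1 (Or.inl rfl)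
  have h2 := not_small hA hR L hL hb hlen s hs halt (-1) (Or.inr rfl)
  have hw : ∀ j, Sgn (s j * eR R j) := fun j => (hs j).mul (eR_sgn R j)
  have hcardF : L.toFinset.card = 2 * k + 3 := by
    rw [List.toFinset_card_of_nodup (hL.imp (fun h => ne_of_lt h)), hlen]
  have hfilt : L.toFinset.filter (fun j => s j * eR R j = - -1) =
      L.toFinset.filter (fun j => ¬ s j * eR R j = -1) := by
    apply Finset.filter_congr
    intro j _
    rcases hw j with h | h <;> rw [h] <;> norm_num
  rw [hfilt] at h2
  have hadd := Finset.card_filter_add_card_filter_not (s := L.toFinset) (fun j => s j * eR R j = -1)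
  have hS : ∑ j ∈ L.toFinset, s j * eR R j =
      ((L.toFinset.filter (fun j => ¬ s j * eR R j = -1)).card : ℤ) -
      ((L.toFinset.filter (fun j => s j * eR R j = -1)).card : ℤ) := by
    rw [← Finset.sum_filter_add_sum_filter_not L.toFinset (fun j => s j * eR R j = -1)]
    rw [Finset.sum_congr rfl (g := fun _ => (-1 : ℤ)) (fun j hj => (Finset.mem_filter.1 hj).2)]
    rw [Finset.sum_congr (s₁ := L.toFinset.filter (fun j => ¬ s j * eR R j = -1)) rfl
      (g := fun _ => (1 : ℤ)) (fun j hj => (hw j).resolve_right (Finset.mem_filter.1 hj).2)]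
    simp; ring
  rw [hsum, hS]
  unfold Sgn
  omega

/-- Left three-column lemma. -/
lemma left3 {k n : ℕ} {A : ℕ → ℕ → ℤ} (hA : ∀ i j, Sgn (A i j)) {e : ℕ → ℤ}
    (he : ∀ j, Sgn (e j)) (hB : Bal A n k e) (hn : 4 ≤ n) (U : List ℕ) (hU : U.Pairwise (· < ·))
    (hb : ∀ b ∈ U, 1 ≤ b ∧ b ≤ n - 3) (hlen : U.length = 2 * k + 1) : Sgn (sgnSum A e 1 U) := by
  have main : ∀ a b, n - 3 < a → a < b → b ≤ n → A (2 * k + 2) a * e a = A (2 * k + 2) b * e b →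
      Sgn (sgnSum A e 1 U) := by
    intro a b h1 h2 h3 h4
    obtain ⟨t, ht, h⟩ := split hA U [a, b] (by rintro rfl; simp at hlen) (by simp) 1
    have h5 := hB (U ++ [a, b]) (by
        rw [List.pairwise_append]
        refine ⟨hU, by simpa using h2, ?_⟩
        intro x hx y hy
        have := hb x hx
        simp at hy
        omega) (by
        intro x hx
        simp at hx
        rcases hx with hx | hx | hx
        · have := hb x hx; omega
        · omega
        · omega) (by simp [hlen])
    rw [h e] at h5
    have h6 : sgnSum A e (1 + U.length) [a, b] = 0 := by
      rw [hlen, show 1 + (2 * k + 1) = 2 * k + 2 by ring]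
      simp only [sgnSum]
      have := (hA (2 * k + 2) a).sq
      linear_combination (A (2*k+2) a) * h4 - e a * this
    rw [h6] at h5
    simpa using h5
  have hs : ∀ j, Sgn (A (2 * k + 2) j * e j) := fun j => (hA _ _).mul (he j)
  rcases hs (n - 2) with h1 | h1 <;> rcases hs (n - 1) with h2 | h2 <;> rcases hs n with h3 | h3 <;>
  first
  | exact main (n - 2) (n - 1) (by omega) (by omega) (by omega) (h1.trans h2.symm)
  | exact main (n - 2) n (by omega) (by omega) (by omega) (h1.trans h3.symm)
  | exact main (n - 1) n (by omega) (by omega) (by omega) (h2.trans h3.symm)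

/-- Right three-column lemma. -/
lemma right3 {k n : ℕ} {A : ℕ → ℕ → ℤ} (hA : ∀ i j, Sgn (A i j)) {e : ℕ → ℤ}
    (he : ∀ j, Sgn (e j)) (hB : Bal A n k e) (hn : 4 ≤ n) (U : List ℕ) (hU : U.Pairwise (· < ·))
    (hb : ∀ b ∈ U, 4 ≤ b ∧ b ≤ n) (hlen : U.length = 2 * k + 1) : Sgn (sgnSum A e 3 U) := by
  have main : ∀ a b, 1 ≤ a → a < b → b ≤ 3 → A 1 a * e a = A 1 b * e b →
      Sgn (sgnSum A e 3 U) := by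
    intro a b h1 h2 h3 h4
    obtain ⟨t, ht, h⟩ := split hA [a, b] U (by simp) (by rintro rfl; simp at hlen) 1
    have h5 := hB ([a, b] ++ U) (by
        rw [List.pairwise_append]
        refine ⟨by simpa using h2, hU, ?_⟩
        intro x hx y hy
        have := hb y hy
        simp at hx
        omega) (by
        intro x hx
        simp at hx
        rcases hx with hx | hx | hx
        · omega
        · omega
        · have := hb x hx; omega) (by simp [hlen])
    rw [h e] at h5
    have h6 : sgnSum A e 1 [a, b] = 0 := by
      simp only [sgnSum]
      have := (hA 1 a).sq
      linear_combination (A 1 a) * h4 - e a * this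
    rw [h6, zero_add] at h5
    have := ht.mul h5
    rwa [← mul_assoc, ht.sq, one_mul] at this
  have hs : ∀ j, Sgn (A 1 j * e j) := fun j => (hA _ _).mul (he j)
  rcases hs 1 with h1 | h1 <;> rcases hs 2 with h2 | h2 <;> rcases hs 3 with h3 | h3 <;>
  first
  | exact main 1 2 (by omega) (by omega) (by omega) (h1.trans h2.symm)
  | exact main 1 3 (by omega) (by omega) (by omega) (h1.trans h3.symm)
  | exact main 2 3 (by omega) (by omega) (by omega) (h2.trans h3.symm)

/-- Contradiction lemma. -/
lemma contra {k : ℕ} (h : ℕ → ℤ) (hh : ∀ j, Sgn (h j)) (G : Finset ℕ) (t : ℕ) (ht : t ∈ G)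
    (hG : 2 * k + 2 ≤ G.card)
    (H : ∀ U ⊆ G, U.card = 2 * k + 1 → ∏ j ∈ U, h j = - h t) : False := by
  obtain ⟨V, hV1, hV2, hV3⟩ := Finset.exists_subsuperset_card_eq
    (Finset.singleton_subset_iff.2 ht) (by simp : ({t} : Finset ℕ).card ≤ 2 * k + 2) hG
  have htV : t ∈ V := Finset.singleton_subset_iff.1 hV1
  have h1 : ∀ j ∈ V, ∏ x ∈ V, h x = h j * - h t := by
    intro j hj
    rw [← Finset.mul_prod_erase V h hj, H (V.erase j) ((Finset.erase_subset _ _).trans hV2)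
      (by rw [Finset.card_erase_of_mem hj]; omega)]
  have h2 : ∀ j ∈ V, h j = h t := by
    intro j hj
    have h3 := h1 j hj
    rw [h1 t htV] at h3
    rcases hh j with a | a <;> rcases hh t with b | b <;> rw [a, b] at h3 <;> rw [a, b] <;>
      revert h3 <;> norm_num
  have h3 := h1 t htV
  rw [Finset.prod_congr rfl h2, Finset.prod_const, hV3, show 2 * k + 2 = 2 * (k + 1) by ring,
    pow_mul, pow_two, (hh t).sq, mul_neg, (hh t).sq] at h3
  norm_num at h3

end TravelProof

namespace TravelProof

lemma four_fact (p q t : Fin 4 → ℤ) (hp : ∀ m, Sgn (p m)) (hq : ∀ m, Sgn (q m))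
    (ht : ∀ m, Sgn (t m)) (b : ℤ) (hb : Sgn b) (hpq : ∑ m, p m * q m = 0)
    (hpt : ∑ m, p m * t m = 0) (hqt : ∑ m, q m * t m = 0) :
    ∃ m1 m2, p m1 + b * q m1 = 2 * p m1 ∧ p m2 + b * q m2 = 2 * p m2 ∧
      p m1 * p m2 = - (t m1 * t m2) := by
  obtain ⟨c, hc⟩ : ∃ c : Fin 4 → ℤ, ∀ m, c m = b * (p m * q m) := ⟨_, fun _ => rfl⟩
  obtain ⟨v, hv⟩ : ∃ v : Fin 4 → ℤ, ∀ m, v m = p m * t m := ⟨_, fun _ => rfl⟩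
  have hcs : ∀ m, Sgn (c m) := fun m => by rw [hc]; exact hb.mul ((hp m).mul (hq m))
  have hvs : ∀ m, Sgn (v m) := fun m => by rw [hv]; exact (hp m).mul (ht m)
  have e1 : ∑ m, c m = 0 := by
    simp only [hc, ← Finset.mul_sum, hpq, mul_zero]
  have e2 : ∑ m, v m = 0 := by simp only [hv, hpt]
  have e3 : ∑ m, c m * v m = 0 := by
    have : ∀ m, c m * v m = b * (q m * t m) := by
      intro m
      rw [hc, hv]
      linear_combination b * q m * t m * (hp m).sq
    simp only [this, ← Finset.mul_sum, hqt, mul_zero]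
  have key : ∀ m, c m = 1 → p m + b * q m = 2 * p m := by
    intro m h
    rw [hc] at h
    linear_combination p m * h - b * q m * (hp m).sq
  have key2 : ∀ m1 m2, v m1 + v m2 = 0 → p m1 * p m2 = - (t m1 * t m2) := by
    intro m1 m2 h
    rw [hv, hv] at h
    linear_combination (p m2 * t m1) * h - p m1 * p m2 * (ht m1).sq - t m1 * t m2 * (hp m2).sq
  have fin : ∀ m1 m2, c m1 = 1 → c m2 = 1 → v m1 + v m2 = 0 →
      ∃ m1 m2, p m1 + b * q m1 = 2 * p m1 ∧ p m2 + b * q m2 = 2 * p m2 ∧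
      p m1 * p m2 = - (t m1 * t m2) :=
    fun m1 m2 h1 h2 h3 => ⟨m1, m2, key _ h1, key _ h2, key2 _ _ h3⟩
  rw [Fin.sum_univ_four] at e1 e2 e3
  rcases hcs 0 with h0 | h0 <;> rcases hcs 1 with h1 | h1 <;> rcases hcs 2 with h2 | h2 <;>
    rcases hcs 3 with h3 | h3 <;> rw [h0, h1, h2, h3] at e1 e3 <;>
  first
  | omega
  | exact fin 0 1 h0 h1 (by linarith)
  | exact fin 0 2 h0 h2 (by linarith)
  | exact fin 0 3 h0 h3 (by linarith)
  | exact fin 1 2 h1 h2 (by linarith)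
  | exact fin 1 3 h1 h3 (by linarith)
  | exact fin 2 3 h2 h3 (by linarith)

/-- If `u` and `u + τ * 2 p` are signs then `u = - τ p`. -/
lemma sgn_force {u τ p : ℤ} (hu : Sgn u) (hτ : Sgn τ) (hp : Sgn p) (h : Sgn (u + τ * (2 * p))) :
    u = - τ * p := by
  unfold Sgn at *
  rcases hu with rfl | rfl <;> rcases hτ with rfl | rfl <;> rcases hp with rfl | rfl <;> omega

lemma sgn_force' {u τ p : ℤ} (hu : Sgn u) (hτ : Sgn τ) (hp : Sgn p) (h : Sgn (2 * p + τ * u)) :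
    u = - τ * p := by
  unfold Sgn at *
  rcases hu with rfl | rfl <;> rcases hτ with rfl | rfl <;> rcases hp with rfl | rfl <;> omega

lemma no_shatter {k n : ℕ} (hk : 1 ≤ k) (hn : 6 * k + 2 ≤ n) {A : ℕ → ℕ → ℤ}
    (hA : ∀ i j, Sgn (A i j)) (e : Fin 4 → ℕ → ℤ) (he : ∀ m j, Sgn (e m j))
    (hB : ∀ m, Bal A n k (e m)) (x y z : ℕ) (hx : 1 ≤ x) (hxy : x < y) (hyz : y < z)
    (hz : z ≤ n) (hx' : x ≤ n - 3) (hz' : 4 ≤ z) (oxy : ∑ m, e m x * e m y = 0)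
    (oxz : ∑ m, e m x * e m z = 0) (oyz : ∑ m, e m y * e m z = 0) : False := by
  have comm : ∀ a b, ∑ m, e m a * e m b = ∑ m, e m b * e m a := fun a b =>
    Finset.sum_congr rfl (fun m _ => mul_comm _ _)
  rcases Nat.lt_or_ge (2 * k + 2) y with hy | hy
  · obtain ⟨m1, m2, f1, f2, f3⟩ := four_fact (fun m => e m y) (fun m => e m z) (fun m => e m x)
      (fun m => he m y) (fun m => he m z) (fun m => he m x)
      (-(A (2 * k + 2) y * A (2 * k + 2) z)) ((hA _ _).mul (hA _ _)).neg oyz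
      (by rw [comm]; exact oxy) (by rw [comm]; exact oxz)
    refine contra (k := k) (fun j => e m1 j * e m2 j) (fun j => (he _ _).mul (he _ _))
      (Finset.Icc 1 (min (y - 1) (n - 3))) x (by simp; omega) (by simp; omega) ?_
    intro U hU hc
    have hsort : (U.sort (· ≤ ·)).Pairwise (· < ·) := Finset.sortedLT_sort U |>.pairwise
    have hmem : ∀ b ∈ U.sort (· ≤ ·), 1 ≤ b ∧ b ≤ y - 1 ∧ b ≤ n - 3 := by
      intro b hb
      have := hU ((Finset.mem_sort _).1 hb)
      simpa using this
    have hlen : (U.sort (· ≤ ·)).length = 2 * k + 1 := by simp [hc]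
    have hto : (U.sort (· ≤ ·)).toFinset = U := Finset.sort_toFinset _ _
    generalize U.sort (· ≤ ·) = L at *
    have hL3 : ∀ m, Sgn (sgnSum A (e m) 1 L) := fun m =>
      left3 hA (he m) (hB m) (by omega) L hsort (fun b hb => ⟨(hmem b hb).1, (hmem b hb).2.2⟩) hlen
    obtain ⟨τ, hτ, hsp⟩ := split hA L [y, z] (by rintro rfl; simp at hlen) (by simp) 1
    have hfull : ∀ m, Sgn (sgnSum A (e m) 1 (L ++ [y, z])) := by
      intro m
      refine hB m _ ?_ ?_ (by simp [hlen])
      · rw [List.pairwise_append]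
        refine ⟨hsort, by simpa using hyz, ?_⟩
        intro a ha b hb
        have := hmem a ha
        simp at hb
        omega
      · intro a ha
        simp at ha
        rcases ha with ha | ha | ha
        · have := hmem a ha; omega
        · omega
        · omega
    have hval : ∀ m, e m y + -(A (2 * k + 2) y * A (2 * k + 2) z) * e m z = 2 * e m y →
        sgnSum A (e m) 1 L = - τ * e m y := by
      intro m hm
      refine sgn_force (hL3 m) hτ (he m y) ?_
      have h := hfull m
      rw [hsp, hlen, show 1 + (2 * k + 1) = 2 * k + 2 by ring] at h
      simp only [sgnSum] at h
      rw [← hm]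
      convert h using 3
      ring
    have hprod := prod_rel hA L hsort 1 (e m1) (e m2) (he m1) (he m2) (hL3 m1) (hL3 m2)
    rw [hval m1 f1, hval m2 f2, hto] at hprod
    rw [← hprod]
    linear_combination f3 + e m1 y * e m2 y * hτ.sq
  · obtain ⟨m1, m2, f1, f2, f3⟩ := four_fact (fun m => e m x) (fun m => e m y) (fun m => e m z)
      (fun m => he m x) (fun m => he m y) (fun m => he m z)
      (-(A 1 x * A 1 y)) ((hA _ _).mul (hA _ _)).neg oxy oxz oyz
    refine contra (k := k) (fun j => e m1 j * e m2 j) (fun j => (he _ _).mul (he _ _))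
      (Finset.Icc (max (y + 1) 4) n) z (by simp; omega) (by simp; omega) ?_
    intro U hU hc
    have hsort : (U.sort (· ≤ ·)).Pairwise (· < ·) := Finset.sortedLT_sort U |>.pairwise
    have hmem : ∀ b ∈ U.sort (· ≤ ·), (y + 1 ≤ b ∧ 4 ≤ b) ∧ b ≤ n := by
      intro b hb
      have := hU ((Finset.mem_sort _).1 hb)
      simpa using this
    have hlen : (U.sort (· ≤ ·)).length = 2 * k + 1 := by simp [hc]
    have hto : (U.sort (· ≤ ·)).toFinset = U := Finset.sort_toFinset _ _
    generalize U.sort (· ≤ ·) = L at *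
    have hL3 : ∀ m, Sgn (sgnSum A (e m) 3 L) := fun m =>
      right3 hA (he m) (hB m) (by omega) L hsort
        (fun b hb => ⟨(hmem b hb).1.2, (hmem b hb).2⟩) hlen
    obtain ⟨τ, hτ, hsp⟩ := split hA [x, y] L (by simp) (by rintro rfl; simp at hlen) 1
    have hfull : ∀ m, Sgn (sgnSum A (e m) 1 ([x, y] ++ L)) := by
      intro m
      refine hB m _ ?_ ?_ (by simp [hlen])
      · rw [List.pairwise_append]
        refine ⟨by simpa using hxy, hsort, ?_⟩
        intro b hb a ha
        have := hmem a ha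
        simp at hb
        omega
      · intro a ha
        simp at ha
        rcases ha with ha | ha | ha
        · omega
        · omega
        · have := hmem a ha; omega
    have hval : ∀ m, e m x + -(A 1 x * A 1 y) * e m y = 2 * e m x →
        sgnSum A (e m) 3 L = - τ * e m x := by
      intro m hm
      refine sgn_force' (hL3 m) hτ (he m x) ?_
      have h := hfull m
      rw [hsp] at h
      simp only [sgnSum] at h
      rw [← hm]
      have h3 : 1 + [x, y].length = 3 := rfl
      rw [h3] at h
      convert h using 2
      ring
    have hprod := prod_rel hA L hsort 3 (e m1) (e m2) (he m1) (he m2) (hL3 m1) (hL3 m2)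
    rw [hval m1 f1, hval m2 f2, hto] at hprod
    rw [← hprod]
    linear_combination f3 + e m1 x * e m2 x * hτ.sq

end TravelProof

namespace TravelProof

lemma no_pair {k n : ℕ} (hk : 1 ≤ k) (hn : 6 * k + 2 ≤ n) {A : ℕ → ℕ → ℤ}
    (hA : IsSignMatrix (2 * k + 2) n A) (F : Finset (Finset ℕ))
    (hF : ∀ R ∈ F, 4 ∉ R ∧ IsNeighborly (reorient A R) (2 * k + 2) n k) (a b : ℕ) (hab : a < b)
    (ha : 1 ≤ a) (hb : b ≤ n) (ha4 : a ≠ 4) (hb4 : b ≠ 4) (hs : F.Shatters {a, b}) : False := by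
  have hmem : ∀ u t : Finset ℕ, {a, b} ∩ u = t → (a ∈ u ↔ a ∈ t) ∧ (b ∈ u ↔ b ∈ t) := by
    rintro u t rfl
    simp
  obtain ⟨u0, hu0, h0⟩ := hs (t := ∅) (by simp)
  obtain ⟨u1, hu1, h1⟩ := hs (t := {a}) (by simp)
  obtain ⟨u2, hu2, h2⟩ := hs (t := {b}) (by simp)
  obtain ⟨u3, hu3, h3⟩ := hs (t := {a, b}) (by simp)
  have m0 := hmem _ _ h0
  have m1 := hmem _ _ h1
  have m2 := hmem _ _ h2
  have m3 := hmem _ _ h3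
  simp [hab.ne, hab.ne'] at m0 m1 m2 m3
  have f0 := hF _ hu0
  have f1 := hF _ hu1
  have f2 := hF _ hu2
  have f3 := hF _ hu3
  have hBal : ∀ m, Bal (ext (2 * k + 2) n A) n k ((![eR u0, eR u1, eR u2, eR u3] : Fin 4 → ℕ → ℤ) m) := by
    intro m
    fin_cases m
    · exact balance hA f0.2
    · exact balance hA f1.2
    · exact balance hA f2.2
    · exact balance hA f3.2
  have hsg : ∀ m j, Sgn ((![eR u0, eR u1, eR u2, eR u3] : Fin 4 → ℕ → ℤ) m j) := by
    intro m j
    fin_cases m <;> exact eR_sgn _ _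
  have main := no_shatter hk hn (ext_sgn hA) _ hsg hBal
  rcases lt_or_gt_of_ne ha4 with h | h
  · rcases lt_or_gt_of_ne hb4 with h' | h'
    · exact main a b 4 ha hab h' (by omega) (by omega) (by omega)
        (by simp [Fin.sum_univ_four, eR, m0, m1, m2, m3])
        (by simp [Fin.sum_univ_four, eR, m0, m1, m2, m3, f0.1, f1.1, f2.1, f3.1])
        (by simp [Fin.sum_univ_four, eR, m0, m1, m2, m3, f0.1, f1.1, f2.1, f3.1])
    · exact main a 4 b ha h h' (by omega) (by omega) (by omega)
        (by simp [Fin.sum_univ_four, eR, m0, m1, m2, m3, f0.1, f1.1, f2.1, f3.1])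
        (by simp [Fin.sum_univ_four, eR, m0, m1, m2, m3])
        (by simp [Fin.sum_univ_four, eR, m0, m1, m2, m3, f0.1, f1.1, f2.1, f3.1])
  · exact main 4 a b (by omega) h hab (by omega) (by omega) (by omega)
        (by simp [Fin.sum_univ_four, eR, m0, m1, m2, m3, f0.1, f1.1, f2.1, f3.1])
        (by simp [Fin.sum_univ_four, eR, m0, m1, m2, m3, f0.1, f1.1, f2.1, f3.1])
        (by simp [Fin.sum_univ_four, eR, m0, m1, m2, m3])

lemma count {k n : ℕ} (hk : 1 ≤ k) (hn : 6 * k + 2 ≤ n) {A : ℕ → ℕ → ℤ}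
    (hA : IsSignMatrix (2 * k + 2) n A) (F : Finset (Finset ℕ))
    (hF : ∀ R ∈ F, 4 ∉ R ∧ IsNeighborly (reorient A R) (2 * k + 2) n k)
    (hF' : ∀ R ∈ F, R ⊆ Finset.Icc 1 n) : F.card ≤ n := by
  have hsub : F.shatterer ⊆ insert ∅ (((Finset.Icc 1 n).erase 4).image (fun j => {j})) := by
    intro s hs
    rw [Finset.mem_shatterer] at hs
    have hin : ∀ j ∈ s, j ∈ (Finset.Icc 1 n).erase 4 := by
      intro j hj
      obtain ⟨u, hu, hsu⟩ := hs.exists_superset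
      rw [Finset.mem_erase]
      refine ⟨?_, hF' u hu (hsu hj)⟩
      rintro rfl
      exact (hF u hu).1 (hsu hj)
    rcases s.eq_empty_or_nonempty with rfl | ⟨a, ha⟩
    · simp
    · have hone : s = {a} := by
        apply Finset.eq_singleton_iff_unique_mem.2 ⟨ha, ?_⟩
        intro b hb
        by_contra hne
        have ia := hin a ha
        have ib := hin b hb
        simp at ia ib
        rcases lt_or_gt_of_ne hne with h | h
        · exact no_pair hk hn hA F hF b a h (by omega) (by omega) ib.1 ia.1
            (hs.mono_right (by intro x hx; simp at hx; rcases hx with rfl | rfl <;> assumption))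
        · exact no_pair hk hn hA F hF a b h (by omega) (by omega) ia.1 ib.1
            (hs.mono_right (by intro x hx; simp at hx; rcases hx with rfl | rfl <;> assumption))
      rw [Finset.mem_insert, Finset.mem_image]
      exact Or.inr ⟨a, hin a ha, hone.symm⟩
  calc F.card ≤ F.shatterer.card := Finset.card_le_card_shatterer F
    _ ≤ _ := Finset.card_le_card hsub
    _ ≤ (((Finset.Icc 1 n).erase 4).image (fun j => ({j} : Finset ℕ))).card + 1 :=
        Finset.card_insert_le _ _
    _ ≤ ((Finset.Icc 1 n).erase 4).card + 1 := by
        gcongr; exact Finset.card_image_le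
    _ = n := by
        rw [Finset.card_erase_of_mem (by simp; omega)]
        simp; omega

lemma find_congr {p q : ℕ → Bool} (L : List ℕ) (h : ∀ x ∈ L, p x = q x) :
    L.find? p = L.find? q := by
  induction L with
  | nil => rfl
  | cons a L ih =>
    rw [List.find?_cons, List.find?_cons, h a (by simp), ih (fun x hx => h x (by simp [hx]))]

lemma ttEntry_neg {B B' : ℕ → ℕ → ℤ} {n : ℕ} (hn : 1 ≤ n)
    (h : ∀ i j, 1 ≤ j → j ≤ n → B' i j = - B i j) (i : ℕ) :
    ttEntry B' n i = ttEntry B n i ∧ ∀ c, ttEntry B n i = some c → 1 ≤ c ∧ c ≤ n := by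
  induction i with
  | zero => simp [ttEntry]
  | succ i ih =>
    cases i with
    | zero => simp [ttEntry, hn]
    | succ i =>
      rw [ttEntry, ttEntry, ih.1]
      cases hc : ttEntry B n (i + 1) with
      | none => simp
      | some c =>
        have hcb := ih.2 c hc
        simp only [Option.bind_some]
        constructor
        · unfold rowChange
          apply find_congr
          intro x hx
          simp at hx
          by_cases hcx : c < x
          · simp [hcx, h _ x (by omega) (by omega), h _ c hcb.1 hcb.2]
          · simp [hcx]
        · intro d hd
          unfold rowChange at hd
          have h1 := List.mem_of_find?_eq_some hd
          have h2 := List.find?_some hd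
          simp at h1 h2
          omega

lemma none_mono {B : ℕ → ℕ → ℤ} {n i : ℕ} (hi : 1 ≤ i) (h : ttEntry B n i = none) (d : ℕ) :
    ttEntry B n (i + d) = none := by
  induction d with
  | zero => exact h
  | succ d ih =>
    obtain ⟨m, hm⟩ : ∃ m, i + d = m + 1 := ⟨i + d - 1, by omega⟩
    rw [← add_assoc, hm, ttEntry, ← hm, ih]; rfl

lemma follows_unique {B : ℕ → ℕ → ℤ} {n : ℕ} {D D' : Finset ℕ} (h : ttFollows B n D)
    (h' : ttFollows B n D') : D = D' := by
  have aux : ∀ D D' : Finset ℕ, ttFollows B n D → ttFollows B n D' → D.card ≤ D'.card → D' = D := by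
    intro D D' h h' hle
    apply Finset.eq_of_subset_of_card_le _ hle
    intro c hc
    obtain ⟨i, h1, h2, h3⟩ := (h'.2 c).1 hc
    refine (h.2 c).2 ⟨i, h1, ?_, h3⟩
    by_contra hlt
    have := none_mono (by omega) h.1 (i - (D.card + 2))
    rw [show D.card + 2 + (i - (D.card + 2)) = i by omega, h3] at this
    simp at this
  rcases le_total D.card D'.card with hle | hle
  · exact (aux D D' h h' hle).symm
  · exact aux D' D h' h hle

lemma compl_eR {n : ℕ} (R : Finset ℕ) (j : ℕ) (h1 : 1 ≤ j) (h2 : j ≤ n) :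
    eR (Finset.Icc 1 n \ R) j = - eR R j := by
  unfold eR
  by_cases h : j ∈ R <;> simp [h, h1, h2]

lemma normalize {A : ℕ → ℕ → ℤ} {r n k : ℕ} (hn : 4 ≤ n) {D : Finset ℕ}
    (h : IsNeighborlyTravel A r n k D) : ∃ R : Finset ℕ, (R ⊆ Finset.Icc 1 n ∧ 4 ∉ R ∧
      IsNeighborly (reorient A R) r n k) ∧ ttFollows (reorient A R) n D := by
  obtain ⟨R, hR, hf, hne⟩ := h
  by_cases h4 : 4 ∈ R
  · refine ⟨Finset.Icc 1 n \ R, ⟨Finset.sdiff_subset, by simp [h4], ?_⟩, ?_⟩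
    · intro S hS hc hpos
      apply hne S hS hc
      unfold ttPositive at *
      rwa [(ttEntry_neg (B := reorient (reorient A R) S) (by omega) (fun i j h1 h2 => by
        simp only [reorient_eq, compl_eR R j h1 h2]; ring) (r + 1)).1] at hpos
    · have : ∀ i, ttEntry (reorient A (Finset.Icc 1 n \ R)) n i = ttEntry (reorient A R) n i :=
        fun i => (ttEntry_neg (by omega) (fun i j h1 h2 => by
          simp only [reorient_eq, compl_eR R j h1 h2]; ring) i).1
      unfold ttFollows at *
      simp only [this]
      exact hf
  · exact ⟨R, ⟨hR, h4, hne⟩, hf⟩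

end TravelProof

/-- For `k ≥ 1`, `r = 2k+2` and `n ≥ 6k+2`, every `r × n` sign matrix has
at most `n` `k`-neighborly plain travels. -/
theorem statement_3 (k n : ℕ) (hk : 1 ≤ k) (hn : 6 * k + 2 ≤ n)
    (A : ℕ → ℕ → ℤ) (hA : IsSignMatrix (2 * k + 2) n A) :
    {D : Finset ℕ | IsPlainTravel (2 * k + 2) n D ∧
      IsNeighborlyTravel A (2 * k + 2) n k D}.ncard ≤ n := by
  classical
  have hex : ∀ D : Finset ℕ, IsNeighborlyTravel A (2 * k + 2) n k D → ∃ R : Finset ℕ,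
      (R ⊆ Finset.Icc 1 n ∧ 4 ∉ R ∧ IsNeighborly (reorient A R) (2 * k + 2) n k) ∧
      ttFollows (reorient A R) n D := fun D h => TravelProof.normalize (by omega) h
  choose! g hg using hex
  let F : Finset (Finset ℕ) := (Finset.Icc 1 n).powerset.filter
    (fun R => 4 ∉ R ∧ IsNeighborly (reorient A R) (2 * k + 2) n k)
  have hF : F.card ≤ n := by
    apply TravelProof.count hk hn hA F
    · intro R hR
      exact (Finset.mem_filter.1 hR).2
    · intro R hR
      exact Finset.mem_powerset.1 (Finset.mem_filter.1 hR).1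
  refine le_trans ?_ hF
  rw [← Set.ncard_coe_finset]
  apply Set.ncard_le_ncard_of_injOn g
  · rintro D ⟨-, hD⟩
    have := (hg D hD).1
    exact Finset.mem_coe.2 (Finset.mem_filter.2 ⟨Finset.mem_powerset.2 this.1, this.2⟩)
  · rintro D ⟨-, hD⟩ D' ⟨-, hD'⟩ heq
    have h1 := (hg D hD).2
    have h2 := (hg D' hD').2
    rw [← heq] at h2
    exact TravelProof.follows_unique h1 h2
end

section
/- Let k ≥ 1, r ≥ 2k+1 and n ≥ 3k+1 be integers, let A be an r×n sign matrix, and let P be a plain travel of A. If P makes a downward move from row r−2k+1 to row r−2k+2 at a column j ≤ n−3k+2, then P is not k-neighborly. -/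
theorem rowChange_eq_some_iff (B : ℕ → ℕ → ℤ) (n i c c' : ℕ) :
    rowChange B n i c = some c' ↔
      c < c' ∧ c' ≤ n ∧ B i c' ≠ B i c ∧ ∀ x, c < x → x < c' → B i x = B i c := by
  unfold rowChange
  rw [List.find?_range_eq_some]
  simp only [decide_eq_true_eq, List.mem_range, Bool.not_eq_true', decide_eq_false_iff_not]
  constructor
  · rintro ⟨⟨h1, h2⟩, h3, h4⟩
    refine ⟨h1, by omega, h2, fun x hx hx' => ?_⟩
    by_contra h
    exact h4 x hx' ⟨hx, h⟩
  · rintro ⟨h1, h2, h3, h4⟩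
    exact ⟨⟨h1, h3⟩, by omega, fun x hx hc => hc.2 (h4 x hc.1 hx)⟩

theorem ttEntry_succ (B : ℕ → ℕ → ℤ) (n i : ℕ) (hi : 1 ≤ i) :
    ttEntry B n (i + 1) = (ttEntry B n i).bind (rowChange B n i) := by
  obtain ⟨m, rfl⟩ : ∃ m, i = m + 1 := ⟨i - 1, by omega⟩
  rfl

theorem ttEntry_pred {B : ℕ → ℕ → ℤ} {n i c : ℕ} (hi : 1 ≤ i)
    (h : ttEntry B n (i + 1) = some c) :
    ∃ d, ttEntry B n i = some d ∧ d < c ∧ c ≤ n ∧ B i c ≠ B i d ∧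
      ∀ x, d < x → x < c → B i x = B i d := by
  rw [ttEntry_succ B n i hi, Option.bind_eq_some_iff] at h
  obtain ⟨d, hd, h⟩ := h
  exact ⟨d, hd, (rowChange_eq_some_iff B n i d c).1 h⟩

theorem ttEntry_next {B : ℕ → ℕ → ℤ} {n i c c' : ℕ} (hi : 1 ≤ i)
    (h : ttEntry B n i = some c) (h1 : c < c') (h2 : c' ≤ n) (h3 : B i c' ≠ B i c)
    (h4 : ∀ x, c < x → x < c' → B i x = B i c) : ttEntry B n (i + 1) = some c' := by
  rw [ttEntry_succ B n i hi, Option.bind_eq_some_iff]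
  exact ⟨c, h, (rowChange_eq_some_iff B n i c c').2 ⟨h1, h2, h3, h4⟩⟩

theorem ttEntry_congr {B B' : ℕ → ℕ → ℤ} {n : ℕ} (i : ℕ) :
    ∀ c, (∀ a x, x ≤ c → B a x = B' a x) → ttEntry B n i = some c →
      ttEntry B' n i = some c := by
  induction i with
  | zero => intro c _ h; simp [ttEntry] at h
  | succ i ih =>
    intro c hc h
    rcases Nat.eq_zero_or_pos i with rfl | hi
    · simpa [ttEntry] using h
    · obtain ⟨d, hd, h1, h2, h3, h4⟩ := ttEntry_pred hi h
      refine ttEntry_next hi (ih d (fun a x hx => hc a x (by omega)) hd) h1 h2 ?_ ?_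
      · rw [← hc _ _ le_rfl, ← hc _ _ h1.le]; exact h3
      · intro x hx hx'
        rw [← hc _ _ hx'.le, ← hc _ _ h1.le]; exact h4 x hx hx'

theorem ttEntry_reorient {B : ℕ → ℕ → ℤ} {n i c : ℕ} {S : Finset ℕ}
    (hS : ∀ x ∈ S, c < x) (h : ttEntry B n i = some c) :
    ttEntry (reorient B S) n i = some c := by
  refine ttEntry_congr i c (fun a x hx => ?_) h
  have : x ∉ S := fun hx' => absurd (hS x hx') (by omega)
  simp [reorient, this]

theorem ttEntry_pos {B : ℕ → ℕ → ℤ} {n i c : ℕ} (h : ttEntry B n i = some c) : 1 ≤ c := by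
  rcases i with _ | _ | i
  · simp [ttEntry] at h
  · simp [ttEntry] at h; omega
  · obtain ⟨d, _, h1, _⟩ := ttEntry_pred (by omega) h
    omega

theorem isSign_reorient {r n : ℕ} {B : ℕ → ℕ → ℤ} (S : Finset ℕ) (h : IsSignMatrix r n B) :
    IsSignMatrix r n (reorient B S) := by
  intro i j h1 h2 h3 h4
  unfold reorient
  have := h i j h1 h2 h3 h4
  split_ifs <;> omega

/-- Two rows are passed using three columns and one flip. -/
theorem two_step {r n : ℕ} {B : ℕ → ℕ → ℤ} (hB : IsSignMatrix r n B) {i c : ℕ} (hi : 1 ≤ i)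
    (hir : i + 1 ≤ r) (hc : c + 3 ≤ n) (h : ttEntry B n i = some c) :
    ∃ (S : Finset ℕ) (c' : ℕ), S.card ≤ 1 ∧ (∀ x ∈ S, c < x ∧ x ≤ c') ∧ c' ≤ c + 3 ∧
      ttEntry (reorient B S) n (i + 2) = some c' := by
  have hc1 := ttEntry_pos h
  have a0 := hB i c hi (by omega) hc1 (by omega)
  have a1 := hB i (c + 1) hi (by omega) (by omega) (by omega)
  have a2 := hB i (c + 2) hi (by omega) (by omega) (by omega)
  have b1 := hB (i + 1) (c + 1) (by omega) (by omega) (by omega) (by omega)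
  have b2 := hB (i + 1) (c + 2) (by omega) (by omega) (by omega) (by omega)
  have b3 := hB (i + 1) (c + 3) (by omega) (by omega) (by omega) (by omega)
  have key : ∀ (S : Finset ℕ) (d c' : ℕ), (∀ x ∈ S, c < x) → c < d → d < c' → c' ≤ n →
      reorient B S i d ≠ reorient B S i c →
      (∀ x, c < x → x < d → reorient B S i x = reorient B S i c) →
      reorient B S (i + 1) c' ≠ reorient B S (i + 1) d →
      (∀ x, d < x → x < c' → reorient B S (i + 1) x = reorient B S (i + 1) d) →
      ttEntry (reorient B S) n (i + 2) = some c' := by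
    intro S d c' hS h1 h2 h3 h4 h5 h6 h7
    exact ttEntry_next (by omega)
      (ttEntry_next hi (ttEntry_reorient hS h) h1 (by omega) h4 h5) h2 h3 h6 h7
  by_cases e1 : B i (c + 1) = B i c
  · by_cases e2 : B (i + 1) (c + 1) = B (i + 1) (c + 2)
    · refine ⟨{c + 1}, c + 2, by simp, by simp, by omega,
        key _ (c + 1) (c + 2) (by simp) (by omega) (by omega) (by omega) ?_ ?_ ?_ ?_⟩
      · simp [reorient]; omega
      · intro x _ _; omega
      · simp [reorient]; omega
      · intro x _ _; omega
    · by_cases e3 : B (i + 1) (c + 1) = B (i + 1) (c + 3)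
      · refine ⟨{c + 1}, c + 3, by simp, by simp, by omega,
          key _ (c + 1) (c + 3) (by simp) (by omega) (by omega) (by omega) ?_ ?_ ?_ ?_⟩
        · simp [reorient]; omega
        · intro x _ _; omega
        · simp [reorient]; omega
        · intro x _ _
          obtain rfl : x = c + 2 := by omega
          simp [reorient]; omega
      · by_cases e4 : B i (c + 2) = B i c
        · refine ⟨{c + 2}, c + 3, by simp, by simp, by omega,
            key _ (c + 2) (c + 3) (by simp) (by omega) (by omega) (by omega) ?_ ?_ ?_ ?_⟩
          · simp [reorient]; omega
          · intro x _ _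
            obtain rfl : x = c + 1 := by omega
            simp [reorient]; omega
          · simp [reorient]; omega
          · intro x _ _; omega
        · refine ⟨{c + 3}, c + 3, by simp, by simp, by omega,
            key _ (c + 2) (c + 3) (by simp) (by omega) (by omega) (by omega) ?_ ?_ ?_ ?_⟩
          · simp [reorient]; omega
          · intro x _ _
            obtain rfl : x = c + 1 := by omega
            simp [reorient]; omega
          · simp [reorient]; omega
          · intro x _ _; omega
  · by_cases e2 : B (i + 1) (c + 1) = B (i + 1) (c + 2)
    · refine ⟨{c + 2}, c + 2, by simp, by simp, by omega,
        key _ (c + 1) (c + 2) (by simp) (by omega) (by omega) (by omega) ?_ ?_ ?_ ?_⟩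
      · simp [reorient]; omega
      · intro x _ _; omega
      · simp [reorient]; omega
      · intro x _ _; omega
    · refine ⟨∅, c + 2, by simp, by simp, by omega,
        key _ (c + 1) (c + 2) (by simp) (by omega) (by omega) (by omega) ?_ ?_ ?_ ?_⟩
      · simp [reorient]; omega
      · intro x _ _; omega
      · simp [reorient]; omega
      · intro x _ _; omega

/-- The last row is passed using one column and one flip. -/
theorem one_step {r n : ℕ} {B : ℕ → ℕ → ℤ} (hB : IsSignMatrix r n B) {c : ℕ} (hr : 1 ≤ r)
    (hc : c + 1 ≤ n) (h : ttEntry B n r = some c) :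
    ∃ S : Finset ℕ, S.card ≤ 1 ∧ (∀ x ∈ S, c < x ∧ x ≤ n) ∧ ttPositive (reorient B S) r n := by
  have hc1 := ttEntry_pos h
  have a0 := hB r c hr (by omega) hc1 (by omega)
  have a1 := hB r (c + 1) hr (by omega) (by omega) (by omega)
  have key : ∀ S : Finset ℕ, (∀ x ∈ S, c < x) →
      reorient B S r (c + 1) ≠ reorient B S r c → ttPositive (reorient B S) r n := by
    intro S hS h1
    unfold ttPositive
    rw [ttEntry_next (c' := c + 1) hr (ttEntry_reorient hS h) (by omega) hc h1
      (fun x _ _ => by omega)]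
    rfl
  by_cases e : B r (c + 1) = B r c
  · refine ⟨{c + 1}, by simp, by simp; omega, key _ (by simp) ?_⟩
    simp [reorient]; omega
  · refine ⟨∅, by simp, by simp, key _ (by simp) ?_⟩
    simp [reorient]; omega

theorem multi_step {r n : ℕ} (t : ℕ) : ∀ (B : ℕ → ℕ → ℤ), IsSignMatrix r n B →
    ∀ i c : ℕ, 1 ≤ i → i + 2 * t = r → c + 3 * t + 1 ≤ n → ttEntry B n i = some c →
    ∃ S : Finset ℕ, S.card ≤ t + 1 ∧ (∀ x ∈ S, c < x ∧ x ≤ n) ∧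
      ttPositive (reorient B S) r n := by
  induction t with
  | zero =>
    intro B hB i c hi hir hc h
    obtain rfl : i = r := by omega
    exact one_step hB hi (by omega) h
  | succ t ih =>
    intro B hB i c hi hir hc h
    obtain ⟨S, c', hS1, hS2, hc', h'⟩ := two_step hB hi (by omega) (by omega) h
    obtain ⟨T, hT1, hT2, hT3⟩ := ih _ (isSign_reorient S hB) (i + 2) c' (by omega) (by omega)
      (by omega) h'
    have hcc : c < c' := by
      obtain ⟨d, hd, hlt, _⟩ := ttEntry_pred (i := i + 1) (by omega) h'
      obtain ⟨e, he, hlt', _⟩ := ttEntry_pred hi hd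
      rw [ttEntry_reorient (fun x hx => (hS2 x hx).1) h, Option.some.injEq] at he
      omega
    refine ⟨S ∪ T, (Finset.card_union_le S T).trans (by omega), ?_, ?_⟩
    · intro x hx
      rcases Finset.mem_union.1 hx with hx | hx
      · have := hS2 x hx; omega
      · have := hT2 x hx; omega
    · have : reorient B (S ∪ T) = reorient (reorient B S) T := by
        funext a x
        by_cases hx : x ∈ S
        · have hxT : x ∉ T := fun hT => by
            have := hS2 x hx; have := hT2 x hT; omega
          simp [reorient, hx, hxT]
        · simp [reorient, hx]
      rw [this]; exact hT3

/-- The entry columns `≤ c` are exactly the earlier ones. -/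
theorem ttEntry_prefix {B : ℕ → ℕ → ℤ} {n : ℕ} (m : ℕ) : ∀ c, ttEntry B n (m + 1) = some c →
    ∃ E : Finset ℕ, E.card = m ∧ (∀ x, x ∈ E ↔ ∃ i, 2 ≤ i ∧ i ≤ m + 1 ∧ ttEntry B n i = some x) ∧
      (∀ x ∈ E, x ≤ c) := by
  induction m with
  | zero =>
    intro c _
    refine ⟨∅, rfl, fun x => ?_, by simp⟩
    simp only [Finset.notMem_empty, false_iff]
    rintro ⟨i, h1, h2, _⟩
    omega
  | succ m ih =>
    intro c h
    obtain ⟨d, hd, hdc, _⟩ := ttEntry_pred (by omega) h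
    obtain ⟨E, hE1, hE2, hE3⟩ := ih d hd
    have hcE : c ∉ E := fun hc => by have := hE3 c hc; omega
    refine ⟨insert c E, by rw [Finset.card_insert_of_notMem hcE, hE1], fun x => ?_, ?_⟩
    · rw [Finset.mem_insert, hE2]
      constructor
      · rintro (rfl | ⟨i, h1, h2, h3⟩)
        · exact ⟨m + 1 + 1, by omega, le_rfl, h⟩
        · exact ⟨i, h1, by omega, h3⟩
      · rintro ⟨i, h1, h2, h3⟩
        rcases Nat.lt_or_ge i (m + 1 + 1) with hi | hi
        · exact Or.inr ⟨i, h1, by omega, h3⟩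
        · obtain rfl : i = m + 1 + 1 := by omega
          rw [h, Option.some.injEq] at h3
          exact Or.inl h3.symm
    · intro x hx
      rcases Finset.mem_insert.1 hx with rfl | hx
      · exact le_rfl
      · have := hE3 x hx; omega

theorem ttEntry_lt {B : ℕ → ℕ → ℤ} {n i c : ℕ} (hi : 1 ≤ i) (h : ttEntry B n i = some c)
    (t : ℕ) : ∀ d, ttEntry B n (i + t + 1) = some d → c < d := by
  induction t with
  | zero =>
    intro d hd
    obtain ⟨e, he, hlt, _⟩ := ttEntry_pred hi hd
    rw [h, Option.some.injEq] at he
    omega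
  | succ t ih =>
    intro d hd
    obtain ⟨e, he, hlt, _⟩ := ttEntry_pred (by omega) hd
    have := ih e he
    omega

theorem ttEntry_of_follows {B : ℕ → ℕ → ℤ} {n : ℕ} {D : Finset ℕ} (h : ttFollows B n D)
    {j m : ℕ} (hj : j ∈ D) (hm : (D.filter (fun c => c ≤ j)).card = m) :
    ttEntry B n (m + 1) = some j := by
  obtain ⟨i, h1, h2, h3⟩ := (h.2 j).1 hj
  obtain ⟨p, rfl⟩ : ∃ p, i = p + 1 := ⟨i - 1, by omega⟩
  obtain ⟨E, hE1, hE2, hE3⟩ := ttEntry_prefix p j h3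
  have : D.filter (fun c => c ≤ j) = E := by
    ext x
    rw [Finset.mem_filter, h.2, hE2]
    constructor
    · rintro ⟨⟨q, q1, q2, q3⟩, hx⟩
      refine ⟨q, q1, ?_, q3⟩
      by_contra hq
      obtain ⟨t, rfl⟩ : ∃ t, q = p + 1 + t + 1 := ⟨q - (p + 2), by omega⟩
      have := ttEntry_lt (by omega) h3 t x q3
      omega
    · rintro ⟨q, q1, q2, q3⟩
      exact ⟨⟨q, q1, by omega, q3⟩, hE3 x ((hE2 x).2 ⟨q, q1, q2, q3⟩)⟩
  rw [this, hE1] at hm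
  rw [← hm]; exact h3

/-- Let `k ≥ 1`, `r ≥ 2k+1`, `n ≥ 3k+1`, `A` an `r × n` sign matrix and `P` a
plain travel of `A` (with downward-move columns `D`).  If `P` makes a downward move from row
`r-2k+1` to row `r-2k+2` at a column `j ≤ n-3k+2` (i.e. `j` is the `(r-2k+1)`-th smallest
element of `D`), then `P` is not `k`-neighborly. -/
theorem statement_5 (k r n : ℕ) (hk : 1 ≤ k) (hr : 2 * k + 1 ≤ r) (hn : 3 * k + 1 ≤ n)
    (A : ℕ → ℕ → ℤ) (hA : IsSignMatrix r n A)
    (D : Finset ℕ) (hD : IsPlainTravel r n D)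
    (j : ℕ) (hjD : j ∈ D) (hrow : (D.filter (fun c => c ≤ j)).card = r - 2 * k + 1)
    (hj : j ≤ n - 3 * k + 2) :
    ¬ IsNeighborlyTravel A r n k D := by
  rintro ⟨R, _, hF, hN⟩
  have h := ttEntry_of_follows hF hjD hrow
  obtain ⟨S, hS1, hS2, hS3⟩ := multi_step (k - 1) _ (isSign_reorient R hA) _ j (by omega)
    (by omega) (by omega) h
  refine hN S (fun x hx => ?_) (by omega) hS3
  have := hS2 x hx
  exact Finset.mem_Icc.2 ⟨by omega, this.2⟩
end

section
/- Let k ≥ 1, r ≥ 2k+1 and n ≥ 2r−1 be integers, and let A be an r×n sign matrix. Then the number of k-neighborly plain travels of A is at most ∑_{i=0}^{r−1} C(n−1, i) − ∑_{i=1}^{k} ( C(n−3i+1, r−2i+1) + C(n−3i−1, r−2i) ), where C denotes the binomial coefficient. -/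
theorem rowChange_eq_some (A : ℕ → ℕ → ℤ) (n i c d : ℕ) :
    rowChange A n i c = some d ↔
      c < d ∧ d ≤ n ∧ A i d ≠ A i c ∧ ∀ x, c < x → x < d → A i x = A i c := by
  unfold rowChange
  rw [List.find?_range_eq_some]
  simp only [decide_eq_true_eq, List.mem_range, Bool.not_eq_true', decide_eq_false_iff_not]
  constructor
  · rintro ⟨⟨h1, h2⟩, h3, h4⟩
    refine ⟨h1, by omega, h2, fun x hx hxd => ?_⟩
    by_contra hne
    exact h4 x hxd ⟨hx, hne⟩
  · rintro ⟨h1, h2, h3, h4⟩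
    refine ⟨⟨h1, h3⟩, by omega, fun x hx hh => hh.2 (h4 x hh.1 hx)⟩

theorem ttEntry_succ_s7 (A : ℕ → ℕ → ℤ) (n i d : ℕ) (hi : 1 ≤ i) :
    ttEntry A n (i + 1) = some d ↔
      ∃ c, ttEntry A n i = some c ∧ rowChange A n i c = some d := by
  obtain ⟨j, rfl⟩ : ∃ j, i = j + 1 := ⟨i - 1, by omega⟩
  simp [ttEntry, Option.bind_eq_some_iff]

/-- Entering row `i` at a column at most `c`. -/
def entersBy (A : ℕ → ℕ → ℤ) (n i c : ℕ) : Prop :=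
  ∃ d, d ≤ c ∧ ttEntry A n i = some d

theorem entersBy_step (A : ℕ → ℕ → ℤ) (n i c u v : ℕ) (hi : 1 ≤ i)
    (h : entersBy A n i c) (hcu : c ≤ u) (huv : u < v) (hv : v ≤ n) (hne : A i u ≠ A i v) :
    entersBy A n (i + 1) v := by
  classical
  obtain ⟨d, hd, hE⟩ := h
  have hex : ∃ x, d < x ∧ x ≤ v ∧ A i x ≠ A i d := by
    by_contra hcon
    push Not at hcon
    have h2 := hcon v (by omega) le_rfl
    rcases Nat.eq_or_lt_of_le (hd.trans hcu) with h0 | h0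
    · subst h0; exact hne h2.symm
    · exact hne ((hcon u h0 huv.le).trans h2.symm)
  have hs := Nat.find_spec hex
  refine ⟨Nat.find hex, hs.2.1, ?_⟩
  rw [ttEntry_succ_s7 _ _ _ _ hi]
  refine ⟨d, hE, ?_⟩
  rw [rowChange_eq_some]
  refine ⟨hs.1, hs.2.1.trans hv, hs.2.2, fun x hx hlt => ?_⟩
  by_contra hxne
  exact Nat.find_min hex hlt ⟨hx, by omega, hxne⟩

theorem ttEntry_congr_s7 (A B : ℕ → ℕ → ℤ) (n c : ℕ) (hAB : ∀ i j, j ≤ c → A i j = B i j)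
    (i d : ℕ) (hi : 1 ≤ i) (hd : d ≤ c) (h : ttEntry A n i = some d) :
    ttEntry B n i = some d := by
  induction i, hi using Nat.le_induction generalizing d with
  | base => simpa [ttEntry] using h
  | succ i hi ih =>
    rw [ttEntry_succ_s7 _ _ _ _ hi] at h ⊢
    obtain ⟨e, he, hr⟩ := h
    rw [rowChange_eq_some] at hr
    obtain ⟨h1, h2, h3, h4⟩ := hr
    refine ⟨e, ih e (by omega) he, ?_⟩
    rw [rowChange_eq_some]
    refine ⟨h1, h2, ?_, fun x hx hxd => ?_⟩
    · rw [← hAB i d hd, ← hAB i e (by omega)]; exact h3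
    · rw [← hAB i x (by omega), ← hAB i e (by omega)]; exact h4 x hx hxd

theorem entersBy_reorient (A : ℕ → ℕ → ℤ) (n i c : ℕ) (S : Finset ℕ) (hi : 1 ≤ i)
    (hS : ∀ x ∈ S, c < x) (h : entersBy A n i c) : entersBy (reorient A S) n i c := by
  obtain ⟨d, hd, hE⟩ := h
  refine ⟨d, hd, ttEntry_congr_s7 A _ n c (fun a j hj => ?_) i d hi hd hE⟩
  have : j ∉ S := fun hj' => by have := hS j hj'; omega
  simp [reorient, this]

theorem reorient_sign {r n : ℕ} {A : ℕ → ℕ → ℤ} (hA : IsSignMatrix r n A) (S : Finset ℕ) :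
    IsSignMatrix r n (reorient A S) := by
  intro i j h1 h2 h3 h4
  unfold reorient
  rcases hA i j h1 h2 h3 h4 with h | h <;> split_ifs <;> simp [h]

theorem reorient_union (A : ℕ → ℕ → ℤ) (S T : Finset ℕ) (h : Disjoint S T) :
    reorient (reorient A S) T = reorient A (S ∪ T) := by
  funext i j
  have hj : j ∈ S → j ∉ T := fun hs => Finset.disjoint_left.mp h hs
  by_cases h1 : j ∈ S <;> by_cases h2 : j ∈ T <;> simp_all [reorient]

theorem gain_one {r n : ℕ} {A : ℕ → ℕ → ℤ} (hA : IsSignMatrix r n A) (i c : ℕ) (hi : 1 ≤ i)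
    (hir : i ≤ r) (hc : 1 ≤ c) (hcn : c + 1 ≤ n) (h : entersBy A n i c) :
    ∃ S : Finset ℕ, S ⊆ Finset.Icc (c + 1) (c + 1) ∧ S.card ≤ 1 ∧
      entersBy (reorient A S) n (i + 1) (c + 1) := by
  by_cases hb : A i c = A i (c + 1)
  · refine ⟨{c + 1}, by simp, by simp, ?_⟩
    apply entersBy_step _ n i c c (c + 1) hi
      (entersBy_reorient _ _ _ _ _ hi (by simp) h) le_rfl (by omega) hcn
    rcases hA i (c + 1) hi hir (by omega) hcn with h | h <;> simp [reorient, hb, h]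
  · refine ⟨∅, by simp, by simp, ?_⟩
    apply entersBy_step _ n i c c (c + 1) hi
      (entersBy_reorient _ _ _ _ _ hi (by simp) h) le_rfl (by omega) hcn
    simpa [reorient] using hb

theorem gain_two_aux {n : ℕ} (A : ℕ → ℕ → ℤ) (i c : ℕ) (hi : 1 ≤ i)
    (hcn : c + 3 ≤ n) (h : entersBy A n i c) (S : Finset ℕ) (hS : S ⊆ Finset.Icc (c + 1) (c + 3))
    (u v u' v' : ℕ) (hu : c ≤ u) (huv : u < v) (hvu : v ≤ u') (huv' : u' < v') (hv' : v' ≤ c + 3)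
    (h1 : reorient A S i u ≠ reorient A S i v)
    (h2 : reorient A S (i + 1) u' ≠ reorient A S (i + 1) v') :
    entersBy (reorient A S) n (i + 2) (c + 3) := by
  have h0 : entersBy (reorient A S) n i c := by
    refine entersBy_reorient _ _ _ _ _ hi (fun x hx => ?_) h
    have := Finset.mem_Icc.mp (hS hx); omega
  have h3 := entersBy_step _ n i c u v hi h0 hu huv (by omega) h1
  obtain ⟨d, hd, hE⟩ := entersBy_step _ n (i + 1) v u' v' (by omega) h3 hvu huv' (by omega) h2
  exact ⟨d, by omega, hE⟩

theorem gain_two {r n : ℕ} {A : ℕ → ℕ → ℤ} (hA : IsSignMatrix r n A) (i c : ℕ) (hi : 1 ≤ i)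
    (hir : i + 1 ≤ r) (hc : 1 ≤ c) (hcn : c + 3 ≤ n) (h : entersBy A n i c) :
    ∃ S : Finset ℕ, S ⊆ Finset.Icc (c + 1) (c + 3) ∧ S.card ≤ 1 ∧
      entersBy (reorient A S) n (i + 2) (c + 3) := by
  have key := gain_two_aux A i c hi hcn h
  have b1 := hA i (c + 1) hi (by omega) (by omega) (by omega)
  have b2 := hA i (c + 2) hi (by omega) (by omega) (by omega)
  have e1 := hA (i + 1) (c + 1) (by omega) hir (by omega) (by omega)
  have e2 := hA (i + 1) (c + 2) (by omega) hir (by omega) (by omega)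
  have e3 := hA (i + 1) (c + 3) (by omega) hir (by omega) (by omega)
  have s0 : (∅ : Finset ℕ) ⊆ Finset.Icc (c + 1) (c + 3) := by simp
  have s1 : ({c + 1} : Finset ℕ) ⊆ Finset.Icc (c + 1) (c + 3) := by simp
  have s2 : ({c + 2} : Finset ℕ) ⊆ Finset.Icc (c + 1) (c + 3) := by simp
  have s3 : ({c + 3} : Finset ℕ) ⊆ Finset.Icc (c + 1) (c + 3) := by simp
  by_cases hb : A i c = A i (c + 1) ∧ A i (c + 1) = A i (c + 2)
  · obtain ⟨hb1, hb2⟩ := hb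
    by_cases h12 : A (i + 1) (c + 1) = A (i + 1) (c + 2)
    · refine ⟨{c + 1}, s1, by simp, key _ s1 c (c + 1) (c + 1) (c + 2) (by omega) (by omega)
        (by omega) (by omega) (by omega) ?_ ?_⟩
      · simp only [reorient, Finset.mem_singleton]; grind
      · simp only [reorient, Finset.mem_singleton]; grind
    · by_cases h13 : A (i + 1) (c + 1) = A (i + 1) (c + 3)
      · refine ⟨{c + 1}, s1, by simp, key _ s1 c (c + 1) (c + 1) (c + 3) (by omega) (by omega)
          (by omega) (by omega) (by omega) ?_ ?_⟩
        · simp only [reorient, Finset.mem_singleton]; grind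
        · simp only [reorient, Finset.mem_singleton]; grind
      · refine ⟨{c + 2}, s2, by simp, key _ s2 (c + 1) (c + 2) (c + 2) (c + 3) (by omega)
          (by omega) (by omega) (by omega) (by omega) ?_ ?_⟩
        · simp only [reorient, Finset.mem_singleton]; grind
        · simp only [reorient, Finset.mem_singleton]; grind
  · obtain ⟨u, v, hu, huv, hv, hne⟩ : ∃ u v, c ≤ u ∧ u < v ∧ v ≤ c + 2 ∧ A i u ≠ A i v := by
      by_cases hb1 : A i c = A i (c + 1)
      · exact ⟨c + 1, c + 2, by omega, by omega, by omega, fun h => hb ⟨hb1, h⟩⟩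
      · exact ⟨c, c + 1, by omega, by omega, by omega, hb1⟩
    by_cases h23 : A (i + 1) (c + 2) = A (i + 1) (c + 3)
    · refine ⟨{c + 3}, s3, by simp, key _ s3 u v (c + 2) (c + 3) hu huv hv (by omega)
        (by omega) ?_ ?_⟩
      · simp only [reorient, Finset.mem_singleton]
        rw [if_neg (by omega), if_neg (by omega)]; exact hne
      · simp only [reorient, Finset.mem_singleton]; grind
    · refine ⟨∅, s0, by simp, key _ s0 u v (c + 2) (c + 3) hu huv hv (by omega)
        (by omega) ?_ ?_⟩
      · simpa [reorient] using hne
      · simpa [reorient] using h23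

theorem gain_even {r n : ℕ} {A : ℕ → ℕ → ℤ} (hA : IsSignMatrix r n A) (i c : ℕ) (hi : 1 ≤ i)
    (hc : 1 ≤ c) (h : entersBy A n i c) (t : ℕ) (hir : i + 2 * t ≤ r + 1)
    (hcn : c + 3 * t ≤ n) :
    ∃ S : Finset ℕ, S ⊆ Finset.Icc (c + 1) (c + 3 * t) ∧ S.card ≤ t ∧
      entersBy (reorient A S) n (i + 2 * t) (c + 3 * t) := by
  induction t with
  | zero =>
    refine ⟨∅, by simp, by simp, ?_⟩
    simpa using entersBy_reorient A n i c ∅ hi (by simp) h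
  | succ t ih =>
    obtain ⟨S, hS, hcard, hE⟩ := ih (by omega) (by omega)
    obtain ⟨T, hT, hTcard, hE'⟩ := gain_two (reorient_sign hA S) (i + 2 * t) (c + 3 * t)
      (by omega) (by omega) (by omega) (by omega) hE
    have hdis : Disjoint S T := by
      rw [Finset.disjoint_left]
      intro x hx hx'
      have h1 := Finset.mem_Icc.mp (hS hx)
      have h2 := Finset.mem_Icc.mp (hT hx')
      omega
    refine ⟨S ∪ T, ?_, ?_, ?_⟩
    · intro x hx
      rw [Finset.mem_Icc]
      rcases Finset.mem_union.mp hx with hx | hx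
      · have h1 := Finset.mem_Icc.mp (hS hx); omega
      · have h1 := Finset.mem_Icc.mp (hT hx); omega
    · have := Finset.card_union_le S T; omega
    · rw [← reorient_union _ _ _ hdis]
      exact hE'

theorem gain_odd {r n : ℕ} {A : ℕ → ℕ → ℤ} (hA : IsSignMatrix r n A) (i c : ℕ) (hi : 1 ≤ i)
    (hc : 1 ≤ c) (h : entersBy A n i c) (t : ℕ) (hir : i + 2 * t + 1 ≤ r + 1)
    (hcn : c + 3 * t + 1 ≤ n) :
    ∃ S : Finset ℕ, S ⊆ Finset.Icc 1 n ∧ S.card ≤ t + 1 ∧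
      entersBy (reorient A S) n (i + 2 * t + 1) (c + 3 * t + 1) := by
  obtain ⟨S, hS, hcard, hE⟩ := gain_even hA i c hi hc h t (by omega) (by omega)
  obtain ⟨T, hT, hTcard, hE'⟩ := gain_one (reorient_sign hA S) (i + 2 * t) (c + 3 * t)
      (by omega) (by omega) (by omega) (by omega) hE
  have hdis : Disjoint S T := by
    rw [Finset.disjoint_left]
    intro x hx hx'
    have h1 := Finset.mem_Icc.mp (hS hx)
    have h2 := Finset.mem_Icc.mp (hT hx')
    omega
  refine ⟨S ∪ T, ?_, ?_, ?_⟩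
  · intro x hx
    rw [Finset.mem_Icc]
    rcases Finset.mem_union.mp hx with hx | hx
    · have h1 := Finset.mem_Icc.mp (hS hx); omega
    · have h1 := Finset.mem_Icc.mp (hT hx); omega
  · have := Finset.card_union_le S T; omega
  · rw [← reorient_union _ _ _ hdis]
    exact hE'

theorem follows_entersBy (A : ℕ → ℕ → ℤ) (n N : ℕ) (D : Finset ℕ) (hD : D ⊆ Finset.Icc 2 N)
    (hpos : 1 ≤ D.card) (h : ttFollows A n D) : entersBy A n (D.card + 1) N := by
  classical
  obtain ⟨-, h⟩ := h
  rcases hE : ttEntry A n (D.card + 1) with _ | c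
  · exfalso
    have hsub : D ⊆ (Finset.Icc 2 D.card).image (fun i => (ttEntry A n i).getD 0) := by
      intro c hc
      obtain ⟨i, h1, h2, h3⟩ := (h c).mp hc
      rw [Finset.mem_image]
      refine ⟨i, Finset.mem_Icc.mpr ⟨h1, ?_⟩, by simp [h3]⟩
      by_contra hcon
      have : i = D.card + 1 := by omega
      rw [this, hE] at h3
      exact absurd h3 (by simp)
    have h1 := (Finset.card_le_card hsub).trans Finset.card_image_le
    rw [Nat.card_Icc] at h1
    omega
  · have hc : c ∈ D := (h c).mpr ⟨D.card + 1, by omega, le_rfl, hE⟩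
    exact ⟨c, (Finset.mem_Icc.mp (hD hc)).2, hE⟩

theorem not_neighborly_even {k r n : ℕ} {A : ℕ → ℕ → ℤ} (hA : IsSignMatrix r n A) (i : ℕ)
    (hik : i ≤ k) (hr : 2 * k + 1 ≤ r) (hn : 3 * i + 1 ≤ n) (D : Finset ℕ)
    (hD : D ⊆ Finset.Icc 2 (n - 3 * i)) (hcard : D.card = r - 2 * i) :
    ¬ IsNeighborlyTravel A r n k D := by
  rintro ⟨R, -, hf, hN⟩
  have hE := follows_entersBy _ n _ D hD (by omega) hf
  obtain ⟨S, hS, hSc, d, -, hd⟩ := gain_even (reorient_sign hA R) _ _ (by omega) (by omega) hE i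
    (by omega) (by omega)
  refine hN S (hS.trans (Finset.Icc_subset_Icc (by omega) (by omega))) (by omega) ?_
  have : D.card + 1 + 2 * i = r + 1 := by omega
  rw [this] at hd
  simp [ttPositive, hd]

theorem not_neighborly_odd {k r n : ℕ} {A : ℕ → ℕ → ℤ} (hA : IsSignMatrix r n A) (i : ℕ)
    (hi : 1 ≤ i) (hik : i ≤ k) (hr : 2 * k + 1 ≤ r) (hn : 3 * i + 1 ≤ n) (D : Finset ℕ)
    (hD : D ⊆ Finset.Icc 2 (n - 3 * i + 2)) (hcard : D.card = r - 2 * i + 1) :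
    ¬ IsNeighborlyTravel A r n k D := by
  rintro ⟨R, -, hf, hN⟩
  have hE := follows_entersBy _ n _ D hD (by omega) hf
  obtain ⟨S, hS, hSc, d, -, hd⟩ := gain_odd (reorient_sign hA R) _ _ (by omega) (by omega) hE
    (i - 1) (by omega) (by omega)
  refine hN S hS (by omega) ?_
  have : D.card + 1 + 2 * (i - 1) + 1 = r + 1 := by omega
  rw [this] at hd
  simp [ttPositive, hd]

/-- For `k ≥ 1`, `r ≥ 2k+1`, `n ≥ 2r-1` and any `r × n` sign matrix `A`, the
number of `k`-neighborly plain travels of `A` is at most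
`∑_{i=0}^{r-1} C(n-1,i) - ∑_{i=1}^{k} (C(n-3i+1, r-2i+1) + C(n-3i-1, r-2i))`. -/
theorem statement_7 (k r n : ℕ) (hk : 1 ≤ k) (hr : 2 * k + 1 ≤ r) (hn : 2 * r - 1 ≤ n)
    (A : ℕ → ℕ → ℤ) (hA : IsSignMatrix r n A) :
    {D : Finset ℕ | IsPlainTravel r n D ∧ IsNeighborlyTravel A r n k D}.ncard ≤
      (∑ i ∈ Finset.range r, (n - 1).choose i) -
        ∑ i ∈ Finset.Icc 1 k,
          ((n - 3 * i + 1).choose (r - 2 * i + 1) + (n - 3 * i - 1).choose (r - 2 * i)) := by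
  classical
  let all : Finset (Finset ℕ) :=
    (Finset.range r).biUnion fun i => Finset.powersetCard i (Finset.Icc 2 n)
  let bad : Finset (Finset ℕ) := (Finset.Icc 1 k).biUnion fun i =>
    Finset.powersetCard (r - 2 * i + 1) (Finset.Icc 2 (n - 3 * i + 2)) ∪
      Finset.powersetCard (r - 2 * i) (Finset.Icc 2 (n - 3 * i))
  have hall : all.card = ∑ i ∈ Finset.range r, (n - 1).choose i := by
    rw [Finset.card_biUnion]
    · refine Finset.sum_congr rfl fun i _ => ?_
      rw [Finset.card_powersetCard, Nat.card_Icc]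
      congr 1
    · intro i _ j _ hij
      rw [Function.onFun, Finset.disjoint_left]
      intro D h1 h2
      rw [Finset.mem_powersetCard] at h1 h2
      exact hij (h1.2.symm.trans h2.2)
  have hbad : bad.card = ∑ i ∈ Finset.Icc 1 k,
      ((n - 3 * i + 1).choose (r - 2 * i + 1) + (n - 3 * i - 1).choose (r - 2 * i)) := by
    rw [Finset.card_biUnion]
    · refine Finset.sum_congr rfl fun i hi => ?_
      rw [Finset.card_union_of_disjoint, Finset.card_powersetCard, Finset.card_powersetCard,
        Nat.card_Icc, Nat.card_Icc]
      · congr 1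
      · rw [Finset.disjoint_left]
        intro D h1 h2
        rw [Finset.mem_powersetCard] at h1 h2
        omega
    · intro i hi j hj hij
      simp only [Finset.coe_Icc, Set.mem_Icc] at hi hj
      rw [Function.onFun, Finset.disjoint_left]
      intro D h1 h2
      simp only [Finset.mem_union, Finset.mem_powersetCard] at h1 h2
      omega
  have hsub : bad ⊆ all := by
    intro D hD
    simp only [bad, all, Finset.mem_biUnion, Finset.mem_union, Finset.mem_powersetCard,
      Finset.mem_Icc, Finset.mem_range] at hD ⊢
    obtain ⟨i, hi, ⟨h1, h2⟩ | ⟨h1, h2⟩⟩ := hD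
    · exact ⟨D.card, by omega, h1.trans (Finset.Icc_subset_Icc le_rfl (by omega)), rfl⟩
    · exact ⟨D.card, by omega, h1.trans (Finset.Icc_subset_Icc le_rfl (by omega)), rfl⟩
  rw [← hall, ← hbad, ← Finset.card_sdiff_of_subset hsub, ← Set.ncard_coe_finset]
  refine Set.ncard_le_ncard ?_ (Finset.finite_toSet _)
  rintro D ⟨⟨hD1, hD2⟩, hD3⟩
  rw [Finset.mem_coe, Finset.mem_sdiff]
  constructor
  · simp only [all, Finset.mem_biUnion, Finset.mem_powersetCard, Finset.mem_range]
    exact ⟨D.card, by omega, hD1, rfl⟩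
  · intro hD
    simp only [bad, Finset.mem_biUnion, Finset.mem_union, Finset.mem_powersetCard,
      Finset.mem_Icc] at hD
    obtain ⟨i, hi, ⟨h1, h2⟩ | ⟨h1, h2⟩⟩ := hD
    · exact not_neighborly_odd hA i hi.1 hi.2 hr (by omega) D h1 h2 hD3
    · exact not_neighborly_even hA i hi.2 hr (by omega) D h1 h2 hD3
end

section
/- Let A = (a_{i,j}) and A' = (a'_{i,j}) be r×n sign matrices with r, n ≥ 1. Then B[A] = B[A'] if and only if there exist sign vectors ε ∈ {+1,−1}^r and δ ∈ {+1,−1}^n such that a'_{i,j} = ε_i·δ_j·a_{i,j} for all 1 ≤ i ≤ r and 1 ≤ j ≤ n. -/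
/-- The chessboard of an `r × n` sign matrix: the square `s(i,j)`, `1 ≤ i ≤ r-1`,
`1 ≤ j ≤ n-1`, is assigned the product `a_{i,j}·a_{i,j+1}·a_{i+1,j}·a_{i+1,j+1}`. -/
def chessboard (A : ℕ → ℕ → ℤ) (i j : ℕ) : ℤ :=
  A i j * A i (j + 1) * A (i + 1) j * A (i + 1) (j + 1)

theorem sq_of_sign {x : ℤ} (h : x = 1 ∨ x = -1) : x * x = 1 := by
  rcases h with h | h <;> simp [h]

theorem pm_one_mul {x y : ℤ} (h : x = 1 ∨ x = -1) (k : y = 1 ∨ y = -1) :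
    x * y = 1 ∨ x * y = -1 := by
  rcases h with h | h <;> rcases k with k | k <;> simp [h, k]

/-- A sign matrix with trivial chessboard has rank one. -/
theorem rank_one_of_trivial (r n : ℕ) (c : ℕ → ℕ → ℤ) (hc : IsSignMatrix r n c)
    (h : ∀ i j, 1 ≤ i → i + 1 ≤ r → 1 ≤ j → j + 1 ≤ n → chessboard c i j = 1) :
    ∀ i j, 1 ≤ i → i ≤ r → 1 ≤ j → j ≤ n → c i j = c i 1 * (c 1 1 * c 1 j) := by
  have key : ∀ i, 1 ≤ i → i + 1 ≤ r → ∀ j, 1 ≤ j → j ≤ n →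
      c i j * c (i + 1) j = c i 1 * c (i + 1) 1 := by
    intro i hi hir j hj
    induction j, hj using Nat.le_induction with
    | base => intro _; rfl
    | succ j hj ih =>
      intro hjn
      have e := ih (by omega)
      rw [← e]
      have hb := h i j hi hir hj hjn
      unfold chessboard at hb
      rcases hc i j hi (by omega) hj (by omega) with h1 | h1 <;>
      rcases hc (i+1) j (by omega) hir hj (by omega) with h2 | h2 <;>
      rw [h1, h2] at hb ⊢ <;> linarith
  intro i j hi
  induction i, hi using Nat.le_induction with
  | base =>
    intro h1 hj hjn
    have := sq_of_sign (hc 1 1 le_rfl h1 le_rfl (by omega))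
    rw [← mul_assoc, this, one_mul]
  | succ i hi ih =>
    intro hir hj hjn
    have e := ih (by omega) hj hjn
    have k := key i hi hir j hj hjn
    have s1 := sq_of_sign (hc i j hi (by omega) hj hjn)
    have s2 := sq_of_sign (hc i 1 hi (by omega) le_rfl (by omega))
    calc c (i+1) j = (c i j * c i j) * c (i+1) j := by rw [s1, one_mul]
      _ = c i j * (c i j * c (i+1) j) := by ring
      _ = (c i 1 * (c 1 1 * c 1 j)) * (c i 1 * c (i+1) 1) := by rw [k, e]
      _ = (c i 1 * c i 1) * (c (i+1) 1 * (c 1 1 * c 1 j)) := by ring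
      _ = _ := by rw [s2, one_mul]

/-- Two `r × n` sign matrices have the same chessboard iff one is obtained from
the other by multiplying rows and columns by signs, i.e. `a'_{i,j} = ε_i·δ_j·a_{i,j}` for
sign vectors `ε ∈ {±1}^r`, `δ ∈ {±1}^n`. -/
theorem statement_9 (r n : ℕ) (hr : 1 ≤ r) (hn : 1 ≤ n)
    (A A' : ℕ → ℕ → ℤ) (hA : IsSignMatrix r n A) (hA' : IsSignMatrix r n A') :
    (∀ i j, 1 ≤ i → i ≤ r - 1 → 1 ≤ j → j ≤ n - 1 →
        chessboard A i j = chessboard A' i j) ↔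
      ∃ ε δ : ℕ → ℤ,
        (∀ i, 1 ≤ i → i ≤ r → ε i = 1 ∨ ε i = -1) ∧
        (∀ j, 1 ≤ j → j ≤ n → δ j = 1 ∨ δ j = -1) ∧
        (∀ i j, 1 ≤ i → i ≤ r → 1 ≤ j → j ≤ n → A' i j = ε i * δ j * A i j) := by
  constructor
  · intro h
    have hc : IsSignMatrix r n (fun i j => A i j * A' i j) := fun i j a b c d =>
      pm_one_mul (hA i j a b c d) (hA' i j a b c d)
    have R := rank_one_of_trivial r n _ hc (by
      intro i j hi hir hj hjn
      have e := h i j hi (by omega) hj (by omega)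
      have s : chessboard A' i j = 1 ∨ chessboard A' i j = -1 :=
        pm_one_mul (pm_one_mul (pm_one_mul (hA' _ _ (by omega) (by omega) (by omega) (by omega))
          (hA' _ _ (by omega) (by omega) (by omega) (by omega)))
          (hA' _ _ (by omega) (by omega) (by omega) (by omega)))
          (hA' _ _ (by omega) (by omega) (by omega) (by omega))
      have m : chessboard (fun i j => A i j * A' i j) i j
          = chessboard A i j * chessboard A' i j := by
        unfold chessboard; ring
      rw [m, e, sq_of_sign s])
    refine ⟨fun i => A i 1 * A' i 1, fun j => (A 1 1 * A' 1 1) * (A 1 j * A' 1 j), ?_, ?_, ?_⟩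
    · intro i hi hir
      exact hc i 1 hi hir le_rfl hn
    · intro j hj hjn
      exact pm_one_mul (hc 1 1 le_rfl hr le_rfl hn) (hc 1 j le_rfl hr hj hjn)
    · intro i j hi hir hj hjn
      have e := R i j hi hir hj hjn
      simp only at e ⊢
      rw [← e, mul_right_comm, sq_of_sign (hA i j hi hir hj hjn), one_mul]
  · rintro ⟨ε, δ, hε, hδ, h⟩ i j hi hir hj hjn
    have e1 := sq_of_sign (hε i hi (by omega))
    have e2 := sq_of_sign (hε (i+1) (by omega) (by omega))
    have d1 := sq_of_sign (hδ j hj (by omega))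
    have d2 := sq_of_sign (hδ (j+1) (by omega) (by omega))
    unfold chessboard
    rw [h i j (by omega) (by omega) (by omega) (by omega),
      h i (j+1) (by omega) (by omega) (by omega) (by omega),
      h (i+1) j (by omega) (by omega) (by omega) (by omega),
      h (i+1) (j+1) (by omega) (by omega) (by omega) (by omega)]
    symm
    calc _ = (ε i * ε i) * (ε (i+1) * ε (i+1)) * (δ j * δ j) * (δ (j+1) * δ (j+1)) *
          (A i j * A i (j + 1) * A (i + 1) j * A (i + 1) (j + 1)) := by ring
      _ = _ := by rw [e1, e2, d1, d2]; ring
end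

section
/- For integers n ≥ r+1 ≥ 2, the number of equivalence classes of r×n sign matrices under reorientation-equivalence is exactly 2^{(n−r−1)(r−1)}. (This is the number of reorientation classes of rank r Lawrence oriented matroids on n elements.) -/
/-- `g` encodes an increasing `r`-tuple `1 ≤ g 1 < g 2 < ⋯ < g r ≤ n` of columns. -/
def IsIncrTuple (r n : ℕ) (g : ℕ → ℕ) : Prop :=
  1 ≤ g 1 ∧ g r ≤ n ∧ ∀ i, 1 ≤ i → i < r → g i < g (i + 1)

/-- The chirotope of an `r × n` sign matrix evaluated at the increasing tuple `g`:
`χ_A(g 1, …, g r) = ∏_{i=1}^r a_{i, g i}`. -/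
def chirotope (r : ℕ) (A : ℕ → ℕ → ℤ) (g : ℕ → ℕ) : ℤ :=
  ∏ i ∈ Finset.Icc 1 r, A i (g i)

/-- Two `r × n` sign matrices are reorientation-equivalent if there exist `δ ∈ {±1}^n` and a
global sign `ε ∈ {±1}` with `χ_{A'}(j₁,…,j_r) = ε·δ_{j₁}⋯δ_{j_r}·χ_A(j₁,…,j_r)` for every
increasing `r`-tuple `1 ≤ j₁ < ⋯ < j_r ≤ n`. -/
def ReorEquiv (r n : ℕ) (A A' : ℕ → ℕ → ℤ) : Prop :=
  ∃ δ : ℕ → ℤ, ∃ ε : ℤ,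
    (∀ j, 1 ≤ j → j ≤ n → δ j = 1 ∨ δ j = -1) ∧ (ε = 1 ∨ ε = -1) ∧
    ∀ g : ℕ → ℕ, IsIncrTuple r n g →
      chirotope r A' g = ε * (∏ i ∈ Finset.Icc 1 r, δ (g i)) * chirotope r A g

/-- The local invariant attached to a `2 × 2` block of consecutive entries. -/
def blockSign (A : ℕ → ℕ → ℤ) (i j : ℕ) : ℤ :=
  (A i j * A i (j+1)) * (A (i+1) j * A (i+1) (j+1))

lemma sgn_mul {a b : ℤ} (ha : a = 1 ∨ a = -1) (hb : b = 1 ∨ b = -1) :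
    a * b = 1 ∨ a * b = -1 := by
  rcases ha with rfl | rfl <;> rcases hb with rfl | rfl <;> simp

lemma sgn_sq {a : ℤ} (ha : a = 1 ∨ a = -1) : a * a = 1 := by
  rcases ha with rfl | rfl <;> simp

lemma sgn_prod {ι : Type*} (s : Finset ι) (f : ι → ℤ) (h : ∀ i ∈ s, f i = 1 ∨ f i = -1) :
    ∏ i ∈ s, f i = 1 ∨ ∏ i ∈ s, f i = -1 :=
  Finset.prod_induction f (fun x => x = 1 ∨ x = -1) (fun _ _ => sgn_mul) (Or.inl rfl) h

lemma tuple_bounds {r n : ℕ} {g : ℕ → ℕ} (hn : r + 1 ≤ n) (hg : IsIncrTuple r n g)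
    {i : ℕ} (h1 : 1 ≤ i) (h2 : i ≤ r) : i ≤ g i ∧ g i ≤ n - r + i := by
  obtain ⟨ha, hb, hc⟩ := hg
  constructor
  · induction i, h1 using Nat.le_induction with
    | base => exact ha
    | succ k hk ih =>
      have := hc k hk (by omega)
      have := ih (by omega)
      omega
  · have key : ∀ m i, 1 ≤ i → i + m = r → g i + m ≤ n := by
      intro m
      induction m with
      | zero => intro i _ h; have : i = r := by omega
                subst this; simpa using hb
      | succ m ih =>
        intro i h1 h
        have := hc i h1 (by omega)
        have := ih (i+1) (by omega) (by omega)
        omega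
    have := key (r - i) i h1 (by omega)
    omega

/-- A tuple with prescribed `i`-th entry. -/
def testTuple (r n i j k : ℕ) : ℕ := if k < i then k else if k = i then j else n - r + k

lemma testTuple_incr {r n i j : ℕ} (hn : r + 1 ≤ n) (h1 : 1 ≤ i) (h2 : i ≤ r)
    (h3 : i ≤ j) (h4 : j ≤ n - r + i) : IsIncrTuple r n (testTuple r n i j) := by
  refine ⟨?_, ?_, ?_⟩
  · unfold testTuple; split_ifs <;> omega
  · unfold testTuple; split_ifs <;> omega
  · intro k hk hkr
    unfold testTuple; split_ifs <;> omega

lemma row_rel {r n : ℕ} (hn : r + 1 ≤ n) {A A' : ℕ → ℕ → ℤ} {δ : ℕ → ℤ} {ε : ℤ}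
    (hA : IsSignMatrix r n A) (hA' : IsSignMatrix r n A')
    (hδ : ∀ j, 1 ≤ j → j ≤ n → δ j = 1 ∨ δ j = -1) (hε : ε = 1 ∨ ε = -1)
    (h : ∀ g : ℕ → ℕ, IsIncrTuple r n g →
      chirotope r A' g = ε * (∏ i ∈ Finset.Icc 1 r, δ (g i)) * chirotope r A g)
    {i j : ℕ} (h1 : 1 ≤ i) (h2 : i ≤ r) (h3 : i ≤ j) (h4 : j + 1 ≤ n - r + i) :
    (A i j * A i (j+1)) * (A' i j * A' i (j+1)) = δ j * δ (j+1) := by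
  have hB : ∀ g : ℕ → ℕ, IsIncrTuple r n g →
      ∏ k ∈ Finset.Icc 1 r, (A' k (g k) * (δ (g k) * A k (g k))) = ε := by
    intro g hg
    have hb : ∀ k ∈ Finset.Icc 1 r, 1 ≤ k ∧ k ≤ r ∧ 1 ≤ g k ∧ g k ≤ n := by
      intro k hk
      rw [Finset.mem_Icc] at hk
      have := tuple_bounds hn hg hk.1 hk.2
      omega
    rw [Finset.prod_mul_distrib, Finset.prod_mul_distrib]
    have e := h g hg
    unfold chirotope at e
    rw [e]
    have s1 := sgn_sq (sgn_prod (Finset.Icc 1 r) (fun k => δ (g k))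
      (fun k hk => hδ _ (hb k hk).2.2.1 (hb k hk).2.2.2))
    have s2 := sgn_sq (sgn_prod (Finset.Icc 1 r) (fun k => A k (g k))
      (fun k hk => hA _ _ (hb k hk).1 (hb k hk).2.1 (hb k hk).2.2.1 (hb k hk).2.2.2))
    linear_combination (ε * (∏ k ∈ Finset.Icc 1 r, A k (g k)) * (∏ k ∈ Finset.Icc 1 r, A k (g k))) * s1 + ε * s2
  have hi : i ∈ Finset.Icc 1 r := Finset.mem_Icc.2 ⟨h1, h2⟩
  have e1 := hB _ (testTuple_incr hn h1 h2 h3 (by omega))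
  have e2 := hB _ (testTuple_incr hn h1 h2 (j := j+1) (by omega) h4)
  rw [← Finset.mul_prod_erase _ _ hi] at e1 e2
  have hR : ∏ k ∈ (Finset.Icc 1 r).erase i, (A' k (testTuple r n i j k) *
        (δ (testTuple r n i j k) * A k (testTuple r n i j k))) =
      ∏ k ∈ (Finset.Icc 1 r).erase i, (A' k (testTuple r n i (j+1) k) *
        (δ (testTuple r n i (j+1) k) * A k (testTuple r n i (j+1) k))) := by
    apply Finset.prod_congr rfl
    intro k hk
    have : testTuple r n i j k = testTuple r n i (j+1) k := by
      simp [testTuple, (Finset.mem_erase.1 hk).1]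
    rw [this]
  rw [hR] at e1
  generalize ∏ k ∈ (Finset.Icc 1 r).erase i, (A' k (testTuple r n i (j+1) k) *
        (δ (testTuple r n i (j+1) k) * A k (testTuple r n i (j+1) k))) = R at e1 e2
  have t1 : testTuple r n i j i = j := by simp [testTuple]
  have t2 : testTuple r n i (j+1) i = j+1 := by simp [testTuple]
  rw [t1] at e1
  rw [t2] at e2
  have hR0 : R ≠ 0 := by
    rintro rfl
    rcases hε with rfl | rfl <;> simp at e1
  have e := mul_right_cancel₀ hR0 (e1.trans e2.symm)
  have sa := sgn_sq (hA i j h1 h2 (by omega) (by omega))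
  have sa' := sgn_sq (hA' i (j+1) h1 h2 (by omega) (by omega))
  have sb := sgn_sq (hA i (j+1) h1 h2 (by omega) (by omega))
  have sd := sgn_sq (hδ j (by omega) (by omega))
  calc (A i j * A i (j+1)) * (A' i j * A' i (j+1))
      = (δ j * δ j) * ((A i j * A i (j+1)) * (A' i j * A' i (j+1))) := by rw [sd, one_mul]
    _ = (A' i j * (δ j * A i j)) * (δ j * A i (j+1) * A' i (j+1)) := by ring
    _ = (A' i (j+1) * (δ (j+1) * A i (j+1))) * (δ j * A i (j+1) * A' i (j+1)) := by rw [e]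
    _ = (A' i (j+1) * A' i (j+1)) * (A i (j+1) * A i (j+1)) * (δ j * δ (j+1)) := by ring
    _ = δ j * δ (j+1) := by rw [sa', sb]; ring

lemma sgn_eq_of_mul {a b : ℤ} (hb : b = 1 ∨ b = -1) (h : a * b = 1) : a = b := by
  rcases hb with rfl | rfl <;> omega

lemma sgn_block {r n : ℕ} {A : ℕ → ℕ → ℤ} (hA : IsSignMatrix r n A) {i j : ℕ}
    (h1 : 1 ≤ i) (h2 : i < r) (h3 : 1 ≤ j) (h4 : j + 1 ≤ n) :
    blockSign A i j = 1 ∨ blockSign A i j = -1 := by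
  unfold blockSign
  exact sgn_mul (sgn_mul (hA _ _ (by omega) (by omega) (by omega) (by omega))
    (hA _ _ (by omega) (by omega) (by omega) (by omega)))
    (sgn_mul (hA _ _ (by omega) (by omega) (by omega) (by omega))
    (hA _ _ (by omega) (by omega) (by omega) (by omega)))

lemma block_of_equiv {r n : ℕ} (hn : r + 1 ≤ n) {A A' : ℕ → ℕ → ℤ}
    (hA : IsSignMatrix r n A) (hA' : IsSignMatrix r n A') (h : ReorEquiv r n A A')
    {i j : ℕ} (h1 : 1 ≤ i) (h2 : i < r) (h3 : i < j) (h4 : j + 1 ≤ n - r + i) :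
    blockSign A i j = blockSign A' i j := by
  obtain ⟨δ, ε, hδ, hε, h⟩ := h
  have e1 := row_rel hn hA hA' hδ hε h h1 h2.le h3.le h4
  have e2 := row_rel hn hA hA' hδ hε h (i := i+1) (j := j) (by omega) h2 h3 (by omega)
  apply sgn_eq_of_mul (sgn_block hA' h1 h2 (by omega) (by omega))
  have sd := sgn_sq (sgn_mul (hδ j (by omega) (by omega)) (hδ (j+1) (by omega) (by omega)))
  rw [← sd]
  nth_rewrite 1 [← e1]
  rw [← e2]
  unfold blockSign
  ring

lemma equiv_of_block {r n : ℕ} (hr : 1 ≤ r) (hn : r + 1 ≤ n) {A A' : ℕ → ℕ → ℤ}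
    (hA : IsSignMatrix r n A) (hA' : IsSignMatrix r n A')
    (h : ∀ i j, 1 ≤ i → i < r → i < j → j + 1 ≤ n - r + i → blockSign A i j = blockSign A' i j) :
    ReorEquiv r n A A' := by
  set B : ℕ → ℕ → ℤ := fun i j => A i j * A' i j with hBdef
  have hB : IsSignMatrix r n B := fun i j a b c d => sgn_mul (hA i j a b c d) (hA' i j a b c d)
  have hd : ∀ i j, 1 ≤ i → i < r → i < j → j + 1 ≤ n - r + i →
      B i j * B i (j+1) = B (i+1) j * B (i+1) (j+1) := by
    intro i j h1 h2 h3 h4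
    apply sgn_eq_of_mul (sgn_mul (hB _ _ (by omega) (by omega) (by omega) (by omega))
      (hB _ _ (by omega) (by omega) (by omega) (by omega)))
    have e := h i j h1 h2 h3 h4
    have s := sgn_sq (sgn_block hA' h1 h2 (show 1 ≤ j by omega) (by omega))
    nth_rewrite 1 [← e] at s
    rw [← s]
    simp only [hBdef, blockSign]
    ring
  set D : ℕ → ℤ := fun j => B (min j r) j * B (min j r) (j+1) with hD
  have hDd : ∀ j m i, 1 ≤ i → i ≤ j → i + m = min j r → j + 1 ≤ n - r + i →
      B i j * B i (j+1) = D j := by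
    intro j m
    induction m with
    | zero => intro i h1 h2 h3 h4
              have : min j r = i := by omega
              simp [hD, this]
    | succ m ih =>
      intro i h1 h2 h3 h4
      rw [hd i j h1 (by omega) (by omega) h4]
      exact ih (i+1) (by omega) (by omega) (by omega) (by omega)
  set δ : ℕ → ℤ := fun j => ∏ k ∈ Finset.Ico 1 j, D k with hδdef
  have hδ : ∀ j, 1 ≤ j → j ≤ n → δ j = 1 ∨ δ j = -1 := by
    intro j h1 h2
    apply sgn_prod
    intro k hk
    rw [Finset.mem_Ico] at hk
    exact sgn_mul (hB _ _ (by omega) (by omega) (by omega) (by omega))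
      (hB _ _ (by omega) (by omega) (by omega) (by omega))
  have hrow : ∀ i j, 1 ≤ i → i ≤ r → i ≤ j → j ≤ n - r + i → B i j * δ j = B i i * δ i := by
    intro i j h1 h2 h3
    induction j, h3 using Nat.le_induction with
    | base => intro _; rfl
    | succ j hj ih =>
      intro h4
      rw [← ih (by omega)]
      have e : δ (j+1) = δ j * D j := by
        simp only [hδdef]
        rw [Finset.prod_Ico_succ_top (by omega)]
      rw [e, ← hDd j (min j r - i) i h1 hj (by omega) h4]
      have := sgn_sq (hB i (j+1) (by omega) (by omega) (by omega) (by omega))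
      linear_combination (B i j * δ j) * this
  refine ⟨δ, ∏ i ∈ Finset.Icc 1 r, (B i i * δ i), hδ, ?_, ?_⟩
  · apply sgn_prod
    intro k hk
    rw [Finset.mem_Icc] at hk
    exact sgn_mul (hB _ _ (by omega) (by omega) (by omega) (by omega))
      (hδ _ (by omega) (by omega))
  · intro g hg
    unfold chirotope
    rw [← Finset.prod_mul_distrib, ← Finset.prod_mul_distrib]
    apply Finset.prod_congr rfl
    intro k hk
    rw [Finset.mem_Icc] at hk
    have hb := tuple_bounds hn hg hk.1 hk.2
    rw [← hrow k (g k) hk.1 hk.2 hb.1 hb.2]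
    have s1 := sgn_sq (hδ (g k) (by omega) (by omega))
    have s2 := sgn_sq (hA k (g k) hk.1 hk.2 (by omega) (by omega))
    simp only [hBdef]
    linear_combination (-(A' k (g k) * A k (g k) * A k (g k))) * s1 - A' k (g k) * s2

lemma sgn_one : (1 : ℤ) = 1 ∨ (1 : ℤ) = -1 := Or.inl rfl

/-- A sign matrix with prescribed block invariants. -/
def realMat (c : ℕ → ℕ → ℤ) (i j : ℕ) : ℤ :=
  ∏ l ∈ Finset.range j, ∏ k ∈ Finset.range i, c k l

lemma realMat_sign {c : ℕ → ℕ → ℤ} (hc : ∀ i j, c i j = 1 ∨ c i j = -1) (i j : ℕ) :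
    realMat c i j = 1 ∨ realMat c i j = -1 :=
  sgn_prod _ _ fun _ _ => sgn_prod _ _ fun _ _ => hc _ _

lemma realMat_block {c : ℕ → ℕ → ℤ} (hc : ∀ i j, c i j = 1 ∨ c i j = -1) (i j : ℕ) :
    blockSign (realMat c) i j = c i j := by
  have e : ∀ i, realMat c i (j+1) = realMat c i j * ∏ k ∈ Finset.range i, c k j := by
    intro i; simp [realMat, Finset.prod_range_succ]
  have s1 := sgn_sq (realMat_sign hc i j)
  have s2 := sgn_sq (realMat_sign hc (i+1) j)
  have s3 := sgn_sq (sgn_prod (Finset.range i) (fun k => c k j) (fun _ _ => hc _ _))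
  unfold blockSign
  rw [e, e, Finset.prod_range_succ]
  generalize ∏ k ∈ Finset.range i, c k j = P at *
  calc _ = (realMat c i j * realMat c i j) * (realMat c (i+1) j * realMat c (i+1) j) * (P * P)
        * c i j := by ring
    _ = _ := by rw [s1, s2, s3]; ring

/-- Sign of a Boolean. -/
def boolSign (b : Bool) : ℤ := if b then 1 else -1

lemma boolSign_sgn (b : Bool) : boolSign b = 1 ∨ boolSign b = -1 := by
  cases b <;> simp [boolSign]

lemma boolSign_inj {b b' : Bool} (h : boolSign b = boolSign b') : b = b' := by
  cases b <;> cases b' <;> simp [boolSign] at h ⊢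

/-- The class of sign matrices with prescribed invariants. -/
def blockClass (r n : ℕ) (c : Fin (n - r - 1) × Fin (r - 1) → Bool) : Set (ℕ → ℕ → ℤ) :=
  {A | IsSignMatrix r n A ∧ ∀ p, blockSign A (p.2 + 1) (p.2 + 2 + p.1) = boolSign (c p)}

/-- Extension of a finite array of signs to all indices. -/
def extendSign (r n : ℕ) (c : Fin (n - r - 1) × Fin (r - 1) → Bool) (i j : ℕ) : ℤ :=
  if h : j - i - 1 < n - r - 1 ∧ i - 1 < r - 1 then boolSign (c (⟨j - i - 1, h.1⟩, ⟨i - 1, h.2⟩))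
  else 1

lemma extendSign_sgn (r n : ℕ) (c : Fin (n - r - 1) × Fin (r - 1) → Bool) (i j : ℕ) :
    extendSign r n c i j = 1 ∨ extendSign r n c i j = -1 := by
  unfold extendSign
  split_ifs
  · exact boolSign_sgn _
  · simp

lemma extendSign_apply (r n : ℕ) (c : Fin (n - r - 1) × Fin (r - 1) → Bool)
    (p : Fin (n - r - 1) × Fin (r - 1)) :
    extendSign r n c (p.2 + 1) (p.2 + 2 + p.1) = boolSign (c p) := by
  obtain ⟨⟨a, ha⟩, ⟨b, hb⟩⟩ := p
  have e : b + 2 + a - (b + 1) - 1 = a := by omega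
  simp [extendSign, e, ha, hb]

lemma realMat_mem (r n : ℕ) (c : Fin (n - r - 1) × Fin (r - 1) → Bool) :
    realMat (extendSign r n c) ∈ blockClass r n c := by
  refine ⟨fun i j _ _ _ _ => realMat_sign (extendSign_sgn r n c) i j, fun p => ?_⟩
  rw [realMat_block (extendSign_sgn r n c), extendSign_apply]

lemma class_eq {r n : ℕ} (hr : 1 ≤ r) (hn : r + 1 ≤ n) {A : ℕ → ℕ → ℤ}
    {c : Fin (n - r - 1) × Fin (r - 1) → Bool} (hA : A ∈ blockClass r n c) :
    {A' | IsSignMatrix r n A' ∧ ReorEquiv r n A A'} = blockClass r n c := by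
  ext A'
  constructor
  · rintro ⟨h1, h2⟩
    refine ⟨h1, fun p => ?_⟩
    rw [← hA.2 p]
    have := p.1.2
    have := p.2.2
    exact (block_of_equiv hn hA.1 h1 h2 (by omega) (by omega) (by omega) (by omega)).symm
  · rintro ⟨h1, h2⟩
    refine ⟨h1, equiv_of_block hr hn hA.1 h1 ?_⟩
    intro i j a1 a2 a3 a4
    have e1 := hA.2 (⟨j - i - 1, by omega⟩, ⟨i - 1, by omega⟩)
    have e2 := h2 (⟨j - i - 1, by omega⟩, ⟨i - 1, by omega⟩)
    have e := e1.trans e2.symm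
    simp only at e
    have x1 : i - 1 + 1 = i := by omega
    have x2 : i - 1 + 2 + (j - i - 1) = j := by omega
    rwa [x1, x2] at e

lemma blockClass_injective (r n : ℕ) : Function.Injective (blockClass r n) := by
  intro c c' h
  have h1 := realMat_mem r n c
  have h2 := h1
  rw [h] at h2
  funext p
  exact boolSign_inj ((h1.2 p).symm.trans (h2.2 p))

lemma exists_class {r n : ℕ} {A : ℕ → ℕ → ℤ} (hA : IsSignMatrix r n A) :
    ∃ c, A ∈ blockClass r n c := by
  refine ⟨fun p => decide (blockSign A (p.2 + 1) (p.2 + 2 + p.1) = 1), hA, fun p => ?_⟩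
  have := p.1.2
  have := p.2.2
  rcases sgn_block hA (i := p.2 + 1) (j := p.2 + 2 + p.1) (by omega) (by omega) (by omega)
    (by omega) with h | h <;> simp [h, boolSign]

/-- For `n ≥ r+1 ≥ 2`, the number of equivalence classes of `r × n` sign
matrices under reorientation-equivalence is exactly `2^{(n-r-1)(r-1)}` (the number of
reorientation classes of rank `r` Lawrence oriented matroids on `n` elements). -/
theorem statement_10 (r n : ℕ) (hr : 1 ≤ r) (hn : r + 1 ≤ n) :
    {C : Set (ℕ → ℕ → ℤ) | ∃ A, IsSignMatrix r n A ∧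
        C = {A' | IsSignMatrix r n A' ∧ ReorEquiv r n A A'}}.ncard =
      2 ^ ((n - r - 1) * (r - 1)) := by
  have e : {C : Set (ℕ → ℕ → ℤ) | ∃ A, IsSignMatrix r n A ∧
        C = {A' | IsSignMatrix r n A' ∧ ReorEquiv r n A A'}} = blockClass r n '' Set.univ := by
    ext C
    constructor
    · rintro ⟨A, hA, rfl⟩
      obtain ⟨c, hc⟩ := exists_class hA
      exact ⟨c, trivial, (class_eq hr hn hc).symm⟩
    · rintro ⟨c, -, rfl⟩
      have h := realMat_mem r n c
      exact ⟨_, h.1, (class_eq hr hn h).symm⟩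
  rw [e, Set.ncard_image_of_injective _ (blockClass_injective r n), Set.ncard_univ,
    Nat.card_eq_fintype_card]
  simp
end

section
/- Let k ≥ 1, r ≥ 2k+2 and n ≥ r+1 be integers. Then F(r−1, n−1, k) + F(r, n−1, k) < F(r, n, k). -/
/-- `F(r,n,k) = (2((n-r) + C(r,k+1) + 2^{r-1}))^{r-1-2k} / (r-1-2k)!` as a rational number. -/
def F (r n k : ℕ) : ℚ :=
  (2 * (((n - r : ℕ) : ℚ) + (r.choose (k + 1) : ℚ) + 2 ^ (r - 1))) ^ (r - 1 - 2 * k) /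
    (Nat.factorial (r - 1 - 2 * k) : ℚ)

theorem bern_aux (x : ℚ) (hx : 0 < x) (p : ℕ) :
    x ^ (p + 1) + 2 * (p + 1) * x ^ p ≤ (x + 2) ^ (p + 1) := by
  induction p with
  | zero => simp
  | succ p ih =>
    have h := mul_le_mul_of_nonneg_right ih (by linarith : 0 ≤ x + 2)
    have h2 : 0 < x ^ p := pow_pos hx p
    have h3 : (0 : ℚ) ≤ (p + 1) * x ^ p := by positivity
    rw [pow_succ (x + 2) (p + 1)]
    refine le_trans ?_ h
    push_cast
    simp only [pow_succ]
    nlinarith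

/-- For `k ≥ 1`, `r ≥ 2k+2` and `n ≥ r+1`,
`F(r-1, n-1, k) + F(r, n-1, k) < F(r, n, k)`. -/
theorem statement_12 (k r n : ℕ) (hk : 1 ≤ k) (hr : 2 * k + 2 ≤ r) (hn : r + 1 ≤ n) :
    F (r - 1) (n - 1) k + F r (n - 1) k < F r n k := by
  obtain ⟨p, rfl⟩ := Nat.exists_eq_add_of_le hr
  obtain ⟨d, rfl⟩ := Nat.exists_eq_add_of_le hn
  unfold F
  have e1 : 2 * k + 2 + p + 1 + d - 1 - (2 * k + 2 + p - 1) = d + 1 := by omega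
  have e2 : 2 * k + 2 + p - 1 - 1 - 2 * k = p := by omega
  have e3 : 2 * k + 2 + p + 1 + d - 1 - (2 * k + 2 + p) = d := by omega
  have e4 : 2 * k + 2 + p - 1 - 2 * k = p + 1 := by omega
  have e5 : 2 * k + 2 + p + 1 + d - (2 * k + 2 + p) = d + 1 := by omega
  have e6 : 2 * k + 2 + p - 1 - 1 = 2 * k + p := by omega
  have e7 : 2 * k + 2 + p - 1 = 2 * k + p + 1 := by omega
  rw [e1, e2, e3, e4, e5, e6, e7]
  have hc : (((2 * k + p + 1).choose (k + 1) : ℕ) : ℚ) ≤ ((2 * k + 2 + p).choose (k + 1) : ℕ) := by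
    exact_mod_cast Nat.choose_le_choose _ (by omega)
  have h2 : (1 : ℚ) ≤ 2 ^ (2 * k + p) := one_le_pow₀ (by norm_num)
  set A : ℚ := (d : ℚ) + ((2 * k + 2 + p).choose (k + 1) : ℕ) + 2 ^ (2 * k + p + 1) with hA
  have hApos : 0 < A := by positivity
  set B : ℚ := ((d + 1 : ℕ) : ℚ) + ((2 * k + p + 1).choose (k + 1) : ℕ) + 2 ^ (2 * k + p) with hB
  have hB0 : 0 ≤ B := by positivity
  have hBA : B ≤ A := by
    rw [hA, hB, pow_succ]; push_cast; linarith
  have e8 : 2 * (((d + 1 : ℕ) : ℚ) + ((2 * k + 2 + p).choose (k + 1) : ℕ) + 2 ^ (2 * k + p + 1))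
      = 2 * A + 2 := by
    rw [hA]; push_cast; ring
  rw [e8, Nat.factorial_succ]
  have hb := bern_aux (2 * A) (by linarith) p
  have hpow : (2 * B) ^ p ≤ (2 * A) ^ p := pow_le_pow_left₀ (by linarith) (by linarith) p
  have hf : (0 : ℚ) < (p.factorial : ℚ) := by exact_mod_cast p.factorial_pos
  have hAp : 0 < (2 * A) ^ p := by positivity
  have hp1 : (0 : ℚ) < p + 1 := by positivity
  have e9 : (2 * B) ^ p / (p.factorial : ℚ)
      = ((p + 1) * (2 * B) ^ p) / (((p + 1) * p.factorial : ℕ) : ℚ) := by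
    push_cast; field_simp
  rw [e9, ← add_div]
  apply div_lt_div_of_pos_right _ (by push_cast; positivity)
  have h5 := mul_le_mul_of_nonneg_left hpow hp1.le
  have h6 := mul_pos hp1 hAp
  linarith
end
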